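/- arXiv:2102.09213 — 5 statements merged into one kernel-verified Lean document; each statement's English description precedes it below -/
import Mathlib

section
/- Let (X, d_X) and (Y, d_Y) be metric spaces such that X is quasi-geodesic, and X and Y are uniformly discrete and of bounded geometry, and let α : X → Y be a coarse embedding. Let d ∈ ℕ. If Y has polynomial growth of degree at most d, i.e. there exist y₀ ∈ Y, C > 0 and r₀ ≥ 0 such that the closed ball B_Y(y₀, r) has at most C·r^d points for every r ≥ r₀, then X has polynomial growth of degree at most d: for every x₀ ∈ X there exist C' > 0 and r₁ ≥ 0 such that the closed ball B_X(x₀, r) has at most C'·r^d points for every r ≥ r₁. -/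
open Filter Metric Set Bornology

noncomputable section

/-- A coarse embedding between metric spaces: there are nondecreasing control functions
`φ⁻, φ⁺ : [0,∞) → ℝ` tending to `+∞` with
`φ⁻(d(x,y)) ≤ d(α x, α y) ≤ φ⁺(d(x,y))` for all `x, y`. -/
def IsCoarseEmbedding {X Y : Type*} [MetricSpace X] [MetricSpace Y] (α : X → Y) : Prop :=
  ∃ φm φp : ℝ → ℝ,
    MonotoneOn φm (Set.Ici 0) ∧ MonotoneOn φp (Set.Ici 0) ∧
    Tendsto φm atTop atTop ∧ Tendsto φp atTop atTop ∧
    ∀ x y : X, φm (dist x y) ≤ dist (α x) (α y) ∧ dist (α x) (α y) ≤ φp (dist x y)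

/-- A metric space is quasi-geodesic if there are `a, b > 0` such that any two points are joined
by an `(a,b)`-quasi-geodesic. -/
def QuasiGeodesicSpace (X : Type*) [MetricSpace X] : Prop :=
  ∃ a : ℝ, 0 < a ∧ ∃ b : ℝ, 0 < b ∧ ∀ x y : X, ∃ L : ℝ, 0 ≤ L ∧ ∃ γ : ℝ → X,
    γ 0 = x ∧ γ L = y ∧ ∀ t ∈ Set.Icc (0:ℝ) L, ∀ t' ∈ Set.Icc (0:ℝ) L,
      (1 / a) * |t - t'| - b ≤ dist (γ t) (γ t') ∧ dist (γ t) (γ t') ≤ a * |t - t'| + b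

/-- A metric space is uniformly discrete if distinct points are at distance at least `C > 0`. -/
def UniformlyDiscrete (X : Type*) [MetricSpace X] : Prop :=
  ∃ C : ℝ, 0 < C ∧ ∀ x y : X, x ≠ y → C ≤ dist x y

/-- A metric space has bounded geometry if for every `r > 0` there is `N` such that every closed
ball of radius `r` has at most `N` points. -/
def BoundedGeometry (X : Type*) [MetricSpace X] : Prop :=
  ∀ r : ℝ, 0 < r → ∃ N : ℕ, ∀ x : X,
    (Metric.closedBall x r).Finite ∧ (Metric.closedBall x r).ncard ≤ N

/-!
A bornologous map out of a quasi-geodesic space is large-scale Lipschitz: sample a quasi-geodesic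
at unit times and add up the displacements of the images. Hence it sends the ball of radius `r ≥ 1`
around `x` into the ball of radius `K * r` around `y`, for a constant `K`. If moreover the fibres
have at most `N` points, then `|B(x, r)| ≤ N * |B(y, K * r)|`, and rescaling the radius by a
constant does not change the degree of polynomial growth. A coarse embedding has fibres of bounded
diameter, so bounded geometry of the source bounds their cardinality.
-/

/-- Bornologous maps, the coarse analogue of uniformly continuous maps: points at bounded distance
have images at bounded distance, uniformly. -/
def IsBornologous {X Y : Type*} [PseudoMetricSpace X] [PseudoMetricSpace Y] (f : X → Y) : Prop :=
  ∀ r : ℝ, ∃ s : ℝ, ∀ x y, dist x y ≤ r → dist (f x) (f y) ≤ s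

/-- Large-scale Lipschitz maps, which are Lipschitz up to an additive error. They map balls of
radius `r` into balls of radius linear in `r`. -/
def IsLargeScaleLipschitz {X Y : Type*} [PseudoMetricSpace X] [PseudoMetricSpace Y]
    (f : X → Y) : Prop :=
  ∃ A B : ℝ, 0 ≤ A ∧ ∀ x y, dist (f x) (f y) ≤ A * dist x y + B

/-- Maps whose fibres have uniformly bounded cardinality. The use of `encard` makes all fibres
finite. -/
def HasBoundedFibers {X Y : Type*} (f : X → Y) : Prop :=
  ∃ N : ℕ, ∀ y, (f ⁻¹' {y}).encard ≤ N

/-- Polynomial growth of degree at most `d`, for balls centred at `x`. Infinite balls count as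
having `0` points, so this is meaningful only where balls are finite. -/
def HasPolynomialGrowthAt {X : Type*} [PseudoMetricSpace X] (x : X) (d : ℝ) : Prop :=
  (fun r : ℝ ↦ ((closedBall x r).ncard : ℝ)) =O[atTop] fun r ↦ r ^ d

theorem hasPolynomialGrowthAt_natCast_iff {X : Type*} [PseudoMetricSpace X] {x : X} {d : ℕ} :
    HasPolynomialGrowthAt x d ↔ ∃ C r₀ : ℝ, 0 < C ∧ 0 ≤ r₀ ∧
      ∀ r : ℝ, r₀ ≤ r → ((closedBall x r).ncard : ℝ) ≤ C * r ^ d := by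
  simp only [HasPolynomialGrowthAt, Real.rpow_natCast]
  constructor
  · intro h
    obtain ⟨C, hC, hbound⟩ := h.exists_pos
    obtain ⟨r₀, hr₀, hle⟩ := (atTop_basis' (0 : ℝ)).eventually_iff.1 hbound.bound
    refine ⟨C, r₀, hC, hr₀, fun r hr ↦ ?_⟩
    simpa [abs_of_nonneg (hr₀.trans hr)] using hle hr
  · rintro ⟨C, r₀, -, hr₀, hle⟩
    refine .of_bound C ((eventually_ge_atTop r₀).mono fun r hr ↦ ?_)
    simpa [abs_of_nonneg (hr₀.trans hr)] using hle r hr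

theorem ncard_le_mul_ncard_of_mapsTo {X Y : Type*} {f : X → Y} {s : Set X} {t : Set Y} {N : ℕ}
    (ht : t.Finite) (hst : MapsTo f s t) (hf : ∀ y ∈ t, (f ⁻¹' {y}).encard ≤ N) :
    s.ncard ≤ N * t.ncard := by
  classical
  have hs : s.Finite := (ht.preimage' fun y hy ↦ finite_of_encard_le_coe (hf y hy)).subset hst
  lift s to Finset X using hs
  lift t to Finset Y using ht
  simp only [ncard_coe_finset]
  refine Finset.card_le_mul_card_image_of_maps_to hst N fun y hy ↦ ?_
  rw [← Nat.cast_le (α := ℕ∞), ← encard_coe_eq_coe_finsetCard]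
  refine (encard_le_encard fun x hx ↦ ?_).trans (hf y hy)
  exact (Finset.mem_filter.1 hx).2

section LargeScaleLipschitz

variable {X Y : Type*} [PseudoMetricSpace X] [PseudoMetricSpace Y] {f : X → Y}

theorem IsLargeScaleLipschitz.exists_mapsTo_closedBall (hf : IsLargeScaleLipschitz f)
    (x : X) (y : Y) :
    ∃ K : ℝ, 0 < K ∧ ∀ r, 1 ≤ r → MapsTo f (closedBall x r) (closedBall y (K * r)) := by
  obtain ⟨A, B, hA, hAB⟩ := hf
  set c := max (B + dist (f x) y) 1
  have hc : 0 < c := one_pos.trans_le (le_max_right _ _)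
  refine ⟨A + c, by positivity, fun r hr z hz ↦ ?_⟩
  calc dist (f z) y ≤ dist (f z) (f x) + dist (f x) y := dist_triangle _ _ _
    _ ≤ A * dist z x + B + dist (f x) y := by gcongr; exact hAB z x
    _ ≤ A * r + c := by
      rw [add_assoc]
      gcongr
      exacts [hz, le_max_left _ _]
    _ ≤ (A + c) * r := by rw [add_mul]; gcongr; exact le_mul_of_one_le_right hc.le hr

theorem HasPolynomialGrowthAt.of_isLargeScaleLipschitz {y : Y} {d : ℝ}
    (hy : HasPolynomialGrowthAt y d) (hfin : ∀ r, (closedBall y r).Finite)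
    (hf : IsLargeScaleLipschitz f) (hfib : HasBoundedFibers f) (x : X) :
    HasPolynomialGrowthAt x d := by
  obtain ⟨K, hK, hmaps⟩ := hf.exists_mapsTo_closedBall x y
  obtain ⟨N, hN⟩ := hfib
  have hcount : (fun r : ℝ ↦ ((closedBall x r).ncard : ℝ)) =O[atTop]
      fun r ↦ ((closedBall y (K * r)).ncard : ℝ) := by
    refine .of_bound N ((eventually_ge_atTop 1).mono fun r hr ↦ ?_)
    simp only [Real.norm_natCast]
    exact_mod_cast ncard_le_mul_ncard_of_mapsTo (hfin _) (hmaps r hr) fun y _ ↦ hN y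
  have hscale : (fun r : ℝ ↦ (K * r) ^ d) =O[atTop] fun r ↦ r ^ d := by
    refine .of_bound (K ^ d) ((eventually_ge_atTop 0).mono fun r hr ↦ ?_)
    rw [Real.mul_rpow hK.le hr, norm_mul, Real.norm_of_nonneg (Real.rpow_nonneg hK.le d)]
  exact (hcount.trans (hy.comp_tendsto (tendsto_id.const_mul_atTop hK))).trans hscale

end LargeScaleLipschitz

theorem QuasiGeodesicSpace.exists_chain {X : Type*} [MetricSpace X] (hX : QuasiGeodesicSpace X) :
    ∃ s A B : ℝ, 0 ≤ A ∧ ∀ x y : X, ∃ (n : ℕ) (u : ℕ → X), u 0 = x ∧ u n = y ∧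
      (∀ i, dist (u i) (u (i + 1)) ≤ s) ∧ (n : ℝ) ≤ A * dist x y + B := by
  obtain ⟨a, ha, b, -, hqg⟩ := hX
  refine ⟨a + b, a, a * b + 1, ha.le, fun x y ↦ ?_⟩
  obtain ⟨L, hL, γ, rfl, rfl, hγ⟩ := hqg x y
  have hmem (i : ℕ) : min (i : ℝ) L ∈ Icc 0 L := ⟨le_min i.cast_nonneg hL, min_le_right _ _⟩
  refine ⟨⌈L⌉₊, fun i ↦ γ (min i L), by simp [hL], by simp [Nat.le_ceil], fun i ↦ ?_, ?_⟩
  · have hstep : |min (i : ℝ) L - min ((i + 1 : ℕ) : ℝ) L| ≤ 1 := by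
      simpa using abs_min_sub_min_le_max (i : ℝ) L ((i + 1 : ℕ) : ℝ) L
    calc dist (γ (min i L)) (γ (min (i + 1 : ℕ) L))
        ≤ a * |min (i : ℝ) L - min ((i + 1 : ℕ) : ℝ) L| + b := (hγ _ (hmem _) _ (hmem _)).2
      _ ≤ a + b := by gcongr; exact mul_le_of_le_one_right ha.le hstep
  · have hlower : 1 / a * L - b ≤ dist (γ 0) (γ L) := by
      simpa [abs_of_nonneg hL] using (hγ 0 ⟨le_rfl, hL⟩ L ⟨hL, le_rfl⟩).1
    calc (⌈L⌉₊ : ℝ) ≤ L + 1 := (Nat.ceil_lt_add_one hL).le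
      _ = a * (1 / a * L - b) + (a * b + 1) := by field_simp; ring
      _ ≤ a * dist (γ 0) (γ L) + (a * b + 1) := by gcongr

theorem IsBornologous.isLargeScaleLipschitz {X Y : Type*} [MetricSpace X] [PseudoMetricSpace Y]
    {f : X → Y} (hf : IsBornologous f) (hX : QuasiGeodesicSpace X) :
    IsLargeScaleLipschitz f := by
  obtain ⟨s, A, B, hA, hchain⟩ := hX.exists_chain
  obtain ⟨t, ht⟩ := hf s
  refine ⟨A * max t 0, B * max t 0, by positivity, fun x y ↦ ?_⟩
  obtain ⟨n, u, rfl, rfl, hstep, hn⟩ := hchain x y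
  have hpath : dist (f (u 0)) (f (u n)) ≤ ∑ _i ∈ Finset.range n, max t 0 :=
    dist_le_range_sum_of_dist_le (f := f ∘ u) n fun {i} _ ↦
      (ht _ _ (hstep i)).trans (le_max_left _ _)
  calc dist (f (u 0)) (f (u n)) ≤ n * max t 0 := by simpa using hpath
    _ ≤ (A * dist (u 0) (u n) + B) * max t 0 := by gcongr
    _ = A * max t 0 * dist (u 0) (u n) + B * max t 0 := by ring

theorem BoundedGeometry.exists_encard_closedBall_le {X : Type*} [MetricSpace X]
    (hX : BoundedGeometry X) (r : ℝ) : ∃ N : ℕ, ∀ x : X, (closedBall x r).encard ≤ N := by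
  obtain ⟨N, hN⟩ := hX (max r 1) (one_pos.trans_le (le_max_right _ _))
  refine ⟨N, fun x ↦ ?_⟩
  calc (closedBall x r).encard ≤ (closedBall x (max r 1)).encard :=
        encard_le_encard (closedBall_subset_closedBall (le_max_left _ _))
    _ ≤ N := encard_le_coe_iff_finite_ncard_le.2 (hN x)

theorem BoundedGeometry.finite_closedBall {X : Type*} [MetricSpace X]
    (hX : BoundedGeometry X) (x : X) (r : ℝ) : (closedBall x r).Finite :=
  let ⟨_, hN⟩ := hX.exists_encard_closedBall_le r
  finite_of_encard_le_coe (hN x)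

namespace IsCoarseEmbedding

variable {X Y : Type*} [MetricSpace X] [MetricSpace Y] {α : X → Y}

theorem isBornologous (hα : IsCoarseEmbedding α) : IsBornologous α := by
  obtain ⟨_, φp, -, hmono, -, -, hφ⟩ := hα
  intro r
  refine ⟨φp (max r 0), fun x y hxy ↦ (hφ x y).2.trans ?_⟩
  exact hmono dist_nonneg (mem_Ici.2 (le_max_right _ _)) (hxy.trans (le_max_left _ _))

theorem exists_dist_le (hα : IsCoarseEmbedding α) (s : ℝ) :
    ∃ R : ℝ, ∀ x y, dist (α x) (α y) ≤ s → dist x y ≤ R := by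
  obtain ⟨_, _, -, -, htop, -, hφ⟩ := hα
  obtain ⟨R, hR⟩ := eventually_atTop.1 (htop.eventually_gt_atTop s)
  refine ⟨R, fun x y hxy ↦ ?_⟩
  contrapose! hxy
  exact (hR _ hxy.le).trans_le (hφ x y).1

theorem hasBoundedFibers (hα : IsCoarseEmbedding α) (hX : BoundedGeometry X) :
    HasBoundedFibers α := by
  obtain ⟨R, hR⟩ := hα.exists_dist_le 0
  obtain ⟨N, hN⟩ := hX.exists_encard_closedBall_le R
  refine ⟨N, fun y ↦ ?_⟩
  obtain hempty | ⟨x, rfl⟩ := (α ⁻¹' {y}).eq_empty_or_nonempty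
  · simp [hempty]
  · have hsub : α ⁻¹' {α x} ⊆ closedBall x R := fun z hz ↦ hR z x (dist_eq_zero.2 hz).le
    exact (encard_le_encard hsub).trans (hN x)

end IsCoarseEmbedding

theorem polynomial_growth_of_coarseEmbedding_general
    {X Y : Type*} [MetricSpace X] [PseudoMetricSpace Y] (hX : QuasiGeodesicSpace X)
    {f : X → Y} (hf : IsBornologous f) (hfib : HasBoundedFibers f) {y : Y} {d : ℝ}
    (hfin : ∀ r, (closedBall y r).Finite) (hy : HasPolynomialGrowthAt y d) (x : X) :
    HasPolynomialGrowthAt x d :=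
  hy.of_isLargeScaleLipschitz hfin (hf.isLargeScaleLipschitz hX) hfib x

/-- Under the standing assumptions (X quasi-geodesic, X and Y uniformly
discrete of bounded geometry, `α` a coarse embedding), if `Y` has polynomial growth of degree at
most `d` then so does `X`. -/
theorem polynomial_growth_of_coarseEmbedding
    {X Y : Type*} [MetricSpace X] [MetricSpace Y]
    (hqg : QuasiGeodesicSpace X)
    (hudX : UniformlyDiscrete X) (hudY : UniformlyDiscrete Y)
    (hbgX : BoundedGeometry X) (hbgY : BoundedGeometry Y)
    (α : X → Y) (hα : IsCoarseEmbedding α)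
    (d : ℕ)
    (hY : ∃ (y₀ : Y) (C r₀ : ℝ), 0 < C ∧ 0 ≤ r₀ ∧
      ∀ r : ℝ, r₀ ≤ r → ((Metric.closedBall y₀ r).ncard : ℝ) ≤ C * r ^ d) :
    ∀ x₀ : X, ∃ (C' r₁ : ℝ), 0 < C' ∧ 0 ≤ r₁ ∧
      ∀ r : ℝ, r₁ ≤ r → ((Metric.closedBall x₀ r).ncard : ℝ) ≤ C' * r ^ d := by
  obtain ⟨y₀, hy₀⟩ := hY
  exact fun x₀ ↦ hasPolynomialGrowthAt_natCast_iff.1 <|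
    polynomial_growth_of_coarseEmbedding_general hqg hα.isBornologous (hα.hasBoundedFibers hbgX)
      (hbgY.finite_closedBall y₀) (hasPolynomialGrowthAt_natCast_iff.2 hy₀) x₀
end
end

section
/- Let (X, d_X) and (Y, d_Y) be metric spaces and α : X → Y a coarse embedding. Then for every n ∈ ℕ, if Y has asymptotic dimension at most n, then X has asymptotic dimension at most n. -/
open Filter Metric Set Bornology

noncomputable section

universe u

/-- A metric space `Z` has asymptotic dimension at most `n`: for every `r > 0` there is a
uniformly bounded cover of `Z` split into `n + 1` families such that two distinct members of a
same family are at distance `> r` from each other. -/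
def AsdimLE (Z : Type u) [MetricSpace Z] (n : ℕ) : Prop :=
  ∀ r : ℝ, 0 < r → ∃ (I : Type u) (U : I → Set Z) (D : ℝ) (c : I → Fin (n + 1)),
    (∀ z : Z, ∃ i : I, z ∈ U i) ∧
    (∀ i : I, Bornology.IsBounded (U i) ∧ Metric.diam (U i) ≤ D) ∧
    (∀ i j : I, i ≠ j → c i = c j → ∀ x ∈ U i, ∀ y ∈ U j, r < dist x y)

/-!
Pull the cover of `Y` back along `α`. The upper control function turns separation in `Y` into
separation of preimages in `X`. Since the lower control function tends to infinity, points of `X`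
with images at bounded distance are themselves at bounded distance, so preimages of uniformly
bounded sets are uniformly bounded.
-/

/-- A cover of `Z` by sets `U i`, coloured by `c`, witnessing asymptotic dimension at scale `r`:
points of one member are at distance at most `D`, and distinct members of the same colour are more
than `r` apart. Bounding distances instead of `Metric.diam` avoids the junk value `0` of the
diameter of an unbounded set. -/
structure IsColoredCover {Z I κ : Type*} [PseudoMetricSpace Z] (r D : ℝ) (U : I → Set Z)
    (c : I → κ) : Prop where
  exists_mem : ∀ z, ∃ i, z ∈ U i
  dist_le : ∀ i, ∀ x ∈ U i, ∀ y ∈ U i, dist x y ≤ D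
  lt_dist : ∀ i j, i ≠ j → c i = c j → ∀ x ∈ U i, ∀ y ∈ U j, r < dist x y

namespace IsColoredCover

theorem preimage {X Y I κ : Type*} [PseudoMetricSpace X] [PseudoMetricSpace Y] {α : X → Y}
    {r s D R : ℝ} {U : I → Set Y} {c : I → κ} (hU : IsColoredCover s D U c)
    (hrs : ∀ x y, dist x y ≤ r → dist (α x) (α y) ≤ s)
    (hDR : ∀ x y, dist (α x) (α y) ≤ D → dist x y ≤ R) :
    IsColoredCover r R (fun i ↦ α ⁻¹' U i) c where
  exists_mem x := hU.exists_mem (α x)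
  dist_le i x hx y hy := hDR x y (hU.dist_le i _ hx _ hy)
  lt_dist i j hij hc x hx y hy :=
    lt_of_not_ge fun hxy ↦ (hU.lt_dist i j hij hc _ hx _ hy).not_ge (hrs x y hxy)

theorem comp_injective {Z I J κ : Type*} [PseudoMetricSpace Z] {r D : ℝ} {U : I → Set Z}
    {c : I → κ} (hU : IsColoredCover r D U c) {g : J → I} (hg : Function.Injective g)
    (hcover : ∀ z, ∃ j, z ∈ U (g j)) : IsColoredCover r D (U ∘ g) (c ∘ g) where
  exists_mem := hcover
  dist_le j := hU.dist_le (g j)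
  lt_dist i j hij := hU.lt_dist (g i) (g j) (hg.ne hij)

theorem exists_small_index {Z : Type u} {I κ : Type*} [PseudoMetricSpace Z] {r D : ℝ}
    {U : I → Set Z} {c : I → κ} (hU : IsColoredCover r D U c) :
    ∃ (J : Type u) (g : J → I), IsColoredCover r D (U ∘ g) (c ∘ g) := by
  -- Keeping one chosen member around each point leaves at most as many indices as points of `Z`,
  -- so they fit in the universe that `AsdimLE` asks for.
  choose f hf using hU.exists_mem
  let e := equivShrink.{u} (range f)
  refine ⟨Shrink.{u} (range f), fun j ↦ (e.symm j : I),
    hU.comp_injective (Subtype.val_injective.comp e.symm.injective) fun z ↦ ?_⟩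
  exact ⟨e ⟨f z, mem_range_self z⟩, by simpa only [Equiv.symm_apply_apply] using hf z⟩

end IsColoredCover

namespace AsdimLE

theorem exists_isColoredCover {Z : Type u} [MetricSpace Z] {n : ℕ} (hZ : AsdimLE Z n) (r : ℝ) :
    ∃ (I : Type u) (U : I → Set Z) (D : ℝ) (c : I → Fin (n + 1)), IsColoredCover r D U c := by
  obtain ⟨I, U, D, c, hcover, hbounded, hsep⟩ := hZ (max r 1) (by positivity)
  exact ⟨I, U, D, c, hcover,
    fun i x hx y hy ↦ (dist_le_diam_of_mem (hbounded i).1 hx hy).trans (hbounded i).2,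
    fun i j hij hc x hx y hy ↦ (le_max_left r 1).trans_lt (hsep i j hij hc x hx y hy)⟩

universe w in
theorem of_exists_isColoredCover {Z : Type u} [MetricSpace Z] {n : ℕ}
    (h : ∀ r : ℝ, 0 < r → ∃ (I : Type w) (U : I → Set Z) (D : ℝ) (c : I → Fin (n + 1)),
      IsColoredCover r D U c) : AsdimLE Z n := by
  intro r hr
  obtain ⟨I, U, D, c, hU⟩ := h r hr
  obtain ⟨J, g, hUg⟩ := hU.exists_small_index
  exact ⟨J, U ∘ g, max D 0, c ∘ g, hUg.exists_mem,
    fun j ↦ ⟨isBounded_iff.2 ⟨D, fun x hx y hy ↦ hUg.dist_le j x hx y hy⟩,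
      diam_le_of_forall_dist_le (le_max_right D 0) fun x hx y hy ↦
        (hUg.dist_le j x hx y hy).trans (le_max_left D 0)⟩,
    hUg.lt_dist⟩

end AsdimLE

namespace IsCoarseEmbedding

variable {X Y : Type*} [MetricSpace X] [MetricSpace Y] {α : X → Y}

theorem exists_dist_map_le (hα : IsCoarseEmbedding α) (r : ℝ) :
    ∃ s, ∀ x y, dist x y ≤ r → dist (α x) (α y) ≤ s := by
  obtain ⟨_, φp, -, hmono, -, -, hφ⟩ := hα
  exact ⟨φp r, fun x y hxy ↦ (hφ x y).2.trans <|
    hmono (mem_Ici.2 dist_nonneg) (mem_Ici.2 (dist_nonneg.trans hxy)) hxy⟩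

theorem exists_dist_le_of_dist_map_le (hα : IsCoarseEmbedding α) (D : ℝ) :
    ∃ R, ∀ x y, dist (α x) (α y) ≤ D → dist x y ≤ R := by
  obtain ⟨φm, _, -, -, htends, -, hφ⟩ := hα
  obtain ⟨R, hR⟩ := eventually_atTop.1 (htends.eventually_gt_atTop D)
  refine ⟨R, fun x y hxy ↦ le_of_not_gt fun hlt ↦ ?_⟩
  exact (hR (dist x y) hlt.le).not_ge ((hφ x y).1.trans hxy)

end IsCoarseEmbedding

/-- If `α : X → Y` is a coarse embedding and `Y` has asymptotic dimension at
most `n`, then `X` has asymptotic dimension at most `n`. -/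
theorem asdim_le_of_coarseEmbedding
    {X : Type u} {Y : Type*} [MetricSpace X] [MetricSpace Y]
    (α : X → Y) (hα : IsCoarseEmbedding α) (n : ℕ)
    (hY : AsdimLE Y n) : AsdimLE X n := by
  refine AsdimLE.of_exists_isColoredCover fun r _ ↦ ?_
  obtain ⟨s, hrs⟩ := hα.exists_dist_map_le r
  obtain ⟨I, U, D, c, hU⟩ := hY.exists_isColoredCover s
  obtain ⟨R, hDR⟩ := hα.exists_dist_le_of_dist_map_le D
  exact ⟨I, fun i ↦ α ⁻¹' U i, R, c, hU.preimage hrs hDR⟩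
end
end

section
/- Let n ≥ 2, let q be the Lorentzian quadratic form q(x) = 2x₁x_{n+1} + x₂² + ⋯ + xₙ² on ℝ^{n+1}, and let o = e₁ − e_{n+1}. Let (s_k) be a sequence of reals, (v_k) a sequence in ℝ^{n−1}, and g_k = a^{s_k} ∘ n(v_k) ∈ O(1,n). Then: (1) if s_k → −∞, there exist scalars λ_k ∈ ℝ with λ_k · g_k⁻¹(o) → e₁; (2) if (s_k) converges in ℝ and ‖v_k‖ → ∞, there exist scalars λ_k with λ_k · g_k⁻¹(o) → e₁; (3) if s_k → +∞ and ‖v_k‖ → ∞, there exist scalars λ_k with λ_k · g_k⁻¹(o) → e₁; (4) if s_k → +∞ and v_k → v_∞ ∈ ℝ^{n−1}, there exist scalars λ_k with λ_k · g_k⁻¹(o) → n(v_∞)⁻¹(e_{n+1}), and the vector n(v_∞)⁻¹(e_{n+1}) is not proportional to e₁. (In the projective model, these statements say that g_k⁻¹·o converges in projective space to the boundary point p⁺ = [e₁] in cases (1)–(3), and to the boundary point n(v_∞)⁻¹·p⁻ ≠ p⁺ in case (4), where p⁻ = [e_{n+1}].) -/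
open Matrix Filter Topology Bornology

noncomputable section

/-- The Lorentzian quadratic form `q(x) = 2 x₁ x_{n+1} + x₂² + ⋯ + xₙ²` on `ℝ^{n+1}`
(coordinates indexed by `Fin (n+1)`, so `x₁` is `x 0` and `x_{n+1}` is `x (Fin.last n)`). -/
def lorQ (n : ℕ) (x : Fin (n + 1) → ℝ) : ℝ :=
  2 * x 0 * x (Fin.last n) +
    ∑ i : Fin (n + 1), if i ≠ 0 ∧ i ≠ Fin.last n then x i ^ 2 else 0

/-- The polar bilinear form `B` of `lorQ`. -/
def lorB (n : ℕ) (x y : Fin (n + 1) → ℝ) : ℝ :=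
  x 0 * y (Fin.last n) + x (Fin.last n) * y 0 +
    ∑ i : Fin (n + 1), if i ≠ 0 ∧ i ≠ Fin.last n then x i * y i else 0

/-- The Lorentz group `O(1,n)`: linear automorphisms of `ℝ^{n+1}` preserving `lorQ`. -/
def LorentzGrp (n : ℕ) : Subgroup (GL (Fin (n + 1)) ℝ) where
  carrier := {g | ∀ x, lorQ n ((g : Matrix (Fin (n + 1)) (Fin (n + 1)) ℝ).mulVec x) = lorQ n x}
  one_mem' := by intro x; simp
  mul_mem' := by
    intro a b ha hb x
    have h : ((a * b : GL (Fin (n + 1)) ℝ) : Matrix (Fin (n + 1)) (Fin (n + 1)) ℝ).mulVec x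
        = (a : Matrix (Fin (n + 1)) (Fin (n + 1)) ℝ).mulVec
            ((b : Matrix (Fin (n + 1)) (Fin (n + 1)) ℝ).mulVec x) := by
      rw [Matrix.mulVec_mulVec]; rfl
    rw [h, ha, hb]
  inv_mem' := by
    intro g hg x
    have h : (g : Matrix (Fin (n + 1)) (Fin (n + 1)) ℝ).mulVec
        ((↑g⁻¹ : Matrix (Fin (n + 1)) (Fin (n + 1)) ℝ).mulVec x) = x := by
      rw [Matrix.mulVec_mulVec]
      have : (g : Matrix (Fin (n + 1)) (Fin (n + 1)) ℝ) * (↑g⁻¹ : Matrix (Fin (n + 1)) (Fin (n + 1)) ℝ)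
          = (1 : Matrix (Fin (n + 1)) (Fin (n + 1)) ℝ) := by
        rw [← Units.val_mul, mul_inv_cancel, Units.val_one]
      rw [this, Matrix.one_mulVec]
    calc lorQ n ((↑g⁻¹ : Matrix (Fin (n + 1)) (Fin (n + 1)) ℝ).mulVec x)
        = lorQ n ((g : Matrix (Fin (n + 1)) (Fin (n + 1)) ℝ).mulVec
            ((↑g⁻¹ : Matrix (Fin (n + 1)) (Fin (n + 1)) ℝ).mulVec x)) := (hg _).symm
      _ = lorQ n x := by rw [h]

/-- The action of an element of `O(1,n)` on a vector of `ℝ^{n+1}`. -/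
def lorAct {n : ℕ} (g : LorentzGrp n) (x : Fin (n + 1) → ℝ) : Fin (n + 1) → ℝ :=
  ((g : GL (Fin (n + 1)) ℝ) : Matrix (Fin (n + 1)) (Fin (n + 1)) ℝ).mulVec x

/-- The base point `o = e₁ − e_{n+1}`, a timelike vector. -/
def basePt (n : ℕ) : Fin (n + 1) → ℝ := fun i =>
  if i = 0 then 1 else if i = Fin.last n then -1 else 0

/-- `u` is a limit direction of a subset `G` of `O(1,n)`: `u` is nonzero lightlike, and some
sequence `λ_k • g_k⁻¹(o)`, with `g_k ∈ G`, converges to `u`. -/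
def IsLimitDirection (n : ℕ) (G : Set (LorentzGrp n)) (u : Fin (n + 1) → ℝ) : Prop :=
  u ≠ 0 ∧ lorQ n u = 0 ∧
    ∃ (g : ℕ → LorentzGrp n) (lam : ℕ → ℝ), (∀ k, g k ∈ G) ∧
      Tendsto (fun k => lam k • lorAct (g k)⁻¹ (basePt n)) atTop (𝓝 u)

/-- A vector `v` is stable under `G ⊆ O(1,n)` if its `ρ`-orbit under `G` is bounded. -/
def IsStableVec {n : ℕ} {V : Type*} [NormedAddCommGroup V] [NormedSpace ℝ V]
    (ρ : LorentzGrp n →* (V →L[ℝ] V)) (G : Set (LorentzGrp n)) (v : V) : Prop :=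
  IsBounded {w : V | ∃ g ∈ G, w = ρ g v}

/-- `SO°(E)`: the identity component of the subgroup of `O(1,n)` of elements leaving `E`
invariant and fixing pointwise every vector orthogonal to `E`. -/
def SOIdComp (n : ℕ) (E : Submodule ℝ (Fin (n + 1) → ℝ)) : Set (LorentzGrp n) :=
  connectedComponentIn
    {g : LorentzGrp n |
      E.map ((g : GL (Fin (n + 1)) ℝ) : Matrix (Fin (n + 1)) (Fin (n + 1)) ℝ).mulVecLin = E ∧
      ∀ x : Fin (n + 1) → ℝ, (∀ e ∈ E, lorB n x e = 0) → lorAct g x = x} 1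

/-!
With `P v = e_{n+1} + v - (⟨v, v⟩ / 2) e₁ = n(v)⁻¹ e_{n+1}`, one has
`e^{-s} (a^s n(v))⁻¹ o = e^{-2s} e₁ - P v = R e₁ - (v + e_{n+1})`, where `R = e^{-2s} + ⟨v, v⟩ / 2`.
If `s → +∞` and `v → v_∞`, the middle expression tends to `-P v_∞`. If `s → -∞` or `‖v‖ → ∞`, then
`R → ∞` while `v = O(√R)`, and dividing the last expression by `R` leaves `e₁` in the limit.
-/

lemma pi_norm_sq_le_dotProduct_self {ι : Type*} [Fintype ι] (v : ι → ℝ) : ‖v‖ ^ 2 ≤ v ⬝ᵥ v := by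
  have hnonneg : 0 ≤ v ⬝ᵥ v := by simpa using dotProduct_self_star_nonneg v
  rw [← Real.le_sqrt (norm_nonneg v) hnonneg, pi_norm_le_iff_of_nonneg (Real.sqrt_nonneg _)]
  intro i
  apply Real.abs_le_sqrt
  rw [sq]
  exact Finset.single_le_sum (f := fun j => v j * v j) (fun j _ => mul_self_nonneg _)
    (Finset.mem_univ i)

lemma sq_max_neg_norm_div_two_le {ι : Type*} [Fintype ι] (s : ℝ) (v : ι → ℝ) :
    max (-s) ‖v‖ ^ 2 / 2 ≤ Real.exp (-s) ^ 2 + v ⬝ᵥ v / 2 := by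
  have hv := pi_norm_sq_le_dotProduct_self v
  rcases le_total (-s) ‖v‖ with h | h
  · rw [max_eq_right h]
    nlinarith [sq_nonneg (Real.exp (-s))]
  · rw [max_eq_left h]
    have hs : (-s) ^ 2 ≤ Real.exp (-s) ^ 2 :=
      pow_le_pow_left₀ ((norm_nonneg v).trans h) (by linarith [Real.add_one_le_exp (-s)]) 2
    nlinarith [sq_nonneg ‖v‖]

lemma tendsto_inv_smul_zero_of_norm_sq_le {ι E : Type*} [SeminormedAddCommGroup E]
    [NormedSpace ℝ E] {l : Filter ι} {R : ι → ℝ} {w : ι → E} {C : ℝ} (hR : Tendsto R l atTop)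
    (hw : ∀ k, ‖w k‖ ^ 2 ≤ C * R k) : Tendsto (fun k => (R k)⁻¹ • w k) l (𝓝 0) := by
  have hlim : Tendsto (fun k => √(C * (R k)⁻¹)) l (𝓝 0) := by
    simpa using (hR.inv_tendsto_atTop.const_mul C).sqrt
  refine squeeze_zero_norm (fun k => Real.le_sqrt_of_sq_le ?_) hlim
  calc ‖(R k)⁻¹ • w k‖ ^ 2 = (R k)⁻¹ ^ 2 * ‖w k‖ ^ 2 := by
        rw [norm_smul, mul_pow, Real.norm_eq_abs, sq_abs]
    _ ≤ (R k)⁻¹ ^ 2 * (C * R k) := by gcongr; exact hw k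
    _ = C * (R k)⁻¹ := by
        rcases eq_or_ne (R k) 0 with h | h
        · simp [h]
        · field_simp

section

variable {n : ℕ} {s : ℝ} {v : Fin (n + 1) → ℝ} {a u : LorentzGrp n}

lemma lorAct_mul (a b : LorentzGrp n) (x : Fin (n + 1) → ℝ) :
    lorAct (a * b) x = lorAct a (lorAct b x) := by
  simp [lorAct, mulVec_mulVec]

lemma lorAct_sub (a : LorentzGrp n) (x y : Fin (n + 1) → ℝ) :
    lorAct a (x - y) = lorAct a x - lorAct a y :=
  mulVec_sub _ _ _

lemma lorAct_smul (a : LorentzGrp n) (c : ℝ) (x : Fin (n + 1) → ℝ) :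
    lorAct a (c • x) = c • lorAct a x :=
  mulVec_smul _ _ _

lemma lorAct_inv_eq_of_lorAct_eq {x y : Fin (n + 1) → ℝ} (h : lorAct a x = y) :
    lorAct a⁻¹ y = x := by
  rw [← h, ← lorAct_mul, inv_mul_cancel]
  simp [lorAct]

/-- `a` acts on `ℝ^{n+1}` as the boost `a^s`, which scales the lightlike vectors `e₁` and `e_{n+1}`
by `e^s` and `e^{-s}` and fixes the other basis vectors. -/
def IsBoost (s : ℝ) (a : LorentzGrp n) : Prop :=
  ∀ x : Fin (n + 1) → ℝ, lorAct a x = fun i =>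
    if i = 0 then Real.exp s * x 0
    else if i = Fin.last n then Real.exp (-s) * x (Fin.last n)
    else x i

/-- `u` acts on `ℝ^{n+1}` as the horospherical translation `n(v)`. The parameter in `ℝ^{n-1}` is
encoded as a vector `v` of `ℝ^{n+1}` whose first and last coordinates vanish. -/
structure IsHoroTranslation (v : Fin (n + 1) → ℝ) (u : LorentzGrp n) : Prop where
  apply_zero : v 0 = 0
  apply_last : v (Fin.last n) = 0
  lorAct_eq : ∀ x : Fin (n + 1) → ℝ, lorAct u x = fun i =>
    if i = 0 then x 0 + v ⬝ᵥ x - (v ⬝ᵥ v / 2) * x (Fin.last n)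
    else if i = Fin.last n then x (Fin.last n)
    else x i - x (Fin.last n) * v i

/-- The vector `e_{n+1} + v - (⟨v, v⟩ / 2) e₁`, equal to `n(v)⁻¹ e_{n+1}` when the first and last
coordinates of `v` vanish. The lines spanned by these vectors, for such `v`, are the boundary
points of hyperbolic space other than `[e₁]`. -/
def horoPt (v : Fin (n + 1) → ℝ) : Fin (n + 1) → ℝ :=
  Pi.single (Fin.last n) 1 + v - (v ⬝ᵥ v / 2) • Pi.single 0 1

lemma IsBoost.lorAct_inv_basePt (hn : n ≠ 0) (ha : IsBoost s a) :
    lorAct a⁻¹ (basePt n) =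
      Real.exp (-s) • Pi.single 0 1 - Real.exp s • Pi.single (Fin.last n) 1 := by
  apply lorAct_inv_eq_of_lorAct_eq
  rw [ha]
  funext i
  by_cases hi : i = 0
  · simp [basePt, hi, hn, ← Real.exp_add]
  by_cases hi' : i = Fin.last n
  · simp [basePt, hi', hn, ← Real.exp_add]
  · simp [basePt, hi, hi']

lemma IsHoroTranslation.lorAct_inv_single_zero (hn : n ≠ 0) (hu : IsHoroTranslation v u) :
    lorAct u⁻¹ (Pi.single 0 1) = Pi.single 0 1 := by
  apply lorAct_inv_eq_of_lorAct_eq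
  rw [hu.lorAct_eq]
  funext i
  by_cases hi : i = 0
  · simp [hi, hn, hu.apply_zero]
  by_cases hi' : i = Fin.last n
  · simp [hi', hn]
  · simp [hi, hi', hn]

lemma dotProduct_horoPt (hv₀ : v 0 = 0) (hvₙ : v (Fin.last n) = 0) :
    v ⬝ᵥ horoPt v = v ⬝ᵥ v := by
  simp [horoPt, hv₀, hvₙ, dotProduct_add, dotProduct_sub]

lemma horoPt_zero (hn : n ≠ 0) (hv₀ : v 0 = 0) : horoPt v 0 = -(v ⬝ᵥ v / 2) := by
  simp [horoPt, hv₀, hn]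

lemma horoPt_last (hn : n ≠ 0) (hvₙ : v (Fin.last n) = 0) : horoPt v (Fin.last n) = 1 := by
  simp [horoPt, hvₙ, hn]

lemma horoPt_of_ne (v : Fin (n + 1) → ℝ) {i : Fin (n + 1)} (hi₀ : i ≠ 0)
    (hiₙ : i ≠ Fin.last n) : horoPt v i = v i := by
  simp [horoPt, hi₀, hiₙ]

lemma IsHoroTranslation.lorAct_inv_single_last (hn : n ≠ 0) (hu : IsHoroTranslation v u) :
    lorAct u⁻¹ (Pi.single (Fin.last n) 1) = horoPt v := by
  apply lorAct_inv_eq_of_lorAct_eq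
  rw [hu.lorAct_eq, dotProduct_horoPt hu.apply_zero hu.apply_last, horoPt_zero hn hu.apply_zero,
    horoPt_last hn hu.apply_last]
  funext i
  by_cases hi : i = 0
  · have hcancel : -(v ⬝ᵥ v / 2) + v ⬝ᵥ v - v ⬝ᵥ v / 2 = 0 := by ring
    simp [hi, hn, hcancel]
  by_cases hi' : i = Fin.last n
  · simp [hi', hn]
  · simp [hi, hi', horoPt_of_ne]

lemma exp_neg_smul_lorAct_inv_mul_basePt (hn : n ≠ 0) (ha : IsBoost s a)
    (hu : IsHoroTranslation v u) :
    Real.exp (-s) • lorAct (a * u)⁻¹ (basePt n) =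
      Real.exp (-s) ^ 2 • Pi.single 0 1 - horoPt v := by
  have hexp : Real.exp (-s) * Real.exp s = 1 := by simp [← Real.exp_add]
  rw [_root_.mul_inv_rev, lorAct_mul, ha.lorAct_inv_basePt hn, lorAct_sub, lorAct_smul, lorAct_smul,
    hu.lorAct_inv_single_zero hn, hu.lorAct_inv_single_last hn, smul_sub, smul_smul, smul_smul,
    hexp, one_smul, sq]

lemma horoPt_ne_smul_single_zero (hn : n ≠ 0) (hvₙ : v (Fin.last n) = 0) (c : ℝ) :
    horoPt v ≠ c • Pi.single 0 1 := by
  intro h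
  have h_last := congrFun h (Fin.last n)
  simp [horoPt_last hn hvₙ, hn] at h_last

lemma continuous_horoPt : Continuous (horoPt (n := n)) := by
  unfold horoPt
  fun_prop

end

section

variable {ι : Type*} {l : Filter ι} {n : ℕ} {s : ι → ℝ} {v : ι → Fin (n + 1) → ℝ}
  {a u : ι → LorentzGrp n}

lemma tendsto_inv_smul_sub_horoPt {t : ι → ℝ} (ht : ∀ k, 0 ≤ t k)
    (hR : Tendsto (fun k => t k + v k ⬝ᵥ v k / 2) l atTop) :
    Tendsto (fun k => (t k + v k ⬝ᵥ v k / 2)⁻¹ • (t k • Pi.single 0 1 - horoPt (v k))) l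
      (𝓝 (Pi.single 0 1)) := by
  have hv : Tendsto (fun k => (t k + v k ⬝ᵥ v k / 2)⁻¹ • v k) l (𝓝 0) :=
    tendsto_inv_smul_zero_of_norm_sq_le (C := 2) hR fun k => by
      linarith [pi_norm_sq_le_dotProduct_self (v k), ht k]
  have he : Tendsto (fun k => (t k + v k ⬝ᵥ v k / 2)⁻¹ •
      (Pi.single (Fin.last n) 1 : Fin (n + 1) → ℝ)) l (𝓝 0) := by
    simpa using hR.inv_tendsto_atTop.smul_const (Pi.single (Fin.last n) 1 : Fin (n + 1) → ℝ)
  have hlim : Tendsto (fun k => Pi.single 0 1 - ((t k + v k ⬝ᵥ v k / 2)⁻¹ • v k +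
      (t k + v k ⬝ᵥ v k / 2)⁻¹ • Pi.single (Fin.last n) 1)) l
      (𝓝 (Pi.single 0 1 : Fin (n + 1) → ℝ)) := by
    simpa using (hv.add he).const_sub (Pi.single 0 1 : Fin (n + 1) → ℝ)
  refine hlim.congr' ?_
  filter_upwards [hR.eventually_ne_atTop 0] with k hk
  rw [← smul_add, eq_inv_smul_iff₀ hk, smul_sub, smul_inv_smul₀ hk, horoPt]
  module

lemma exists_tendsto_smul_single_zero (hn : n ≠ 0)
    (ha : ∀ k, IsBoost (s k) (a k)) (hu : ∀ k, IsHoroTranslation (v k) (u k))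
    (h : Tendsto (fun k => max (-s k) ‖v k‖) l atTop) :
    ∃ lam : ι → ℝ, Tendsto (fun k => lam k • lorAct (a k * u k)⁻¹ (basePt n)) l
      (𝓝 (Pi.single 0 1)) := by
  have hR : Tendsto (fun k => Real.exp (-s k) ^ 2 + v k ⬝ᵥ v k / 2) l atTop :=
    tendsto_atTop_mono (fun k => sq_max_neg_norm_div_two_le (s k) (v k))
      (((tendsto_pow_atTop two_ne_zero).comp h).atTop_div_const two_pos)
  refine ⟨fun k => (Real.exp (-s k) ^ 2 + v k ⬝ᵥ v k / 2)⁻¹ * Real.exp (-s k), ?_⟩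
  simp only [mul_smul, exp_neg_smul_lorAct_inv_mul_basePt hn (ha _) (hu _)]
  exact tendsto_inv_smul_sub_horoPt (fun k => sq_nonneg _) hR

lemma exists_tendsto_smul_horoPt (hn : n ≠ 0)
    (ha : ∀ k, IsBoost (s k) (a k)) (hu : ∀ k, IsHoroTranslation (v k) (u k))
    (hs : Tendsto s l atTop) {vLim : Fin (n + 1) → ℝ} (hv : Tendsto v l (𝓝 vLim)) :
    ∃ lam : ι → ℝ, Tendsto (fun k => lam k • lorAct (a k * u k)⁻¹ (basePt n)) l
      (𝓝 (horoPt vLim)) := by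
  refine ⟨fun k => -Real.exp (-s k), ?_⟩
  simp only [neg_smul, exp_neg_smul_lorAct_inv_mul_basePt hn (ha _) (hu _), neg_sub]
  have hexp : Tendsto (fun k => Real.exp (-s k)) l (𝓝 0) :=
    Real.tendsto_exp_neg_atTop_nhds_zero.comp hs
  have hhoro : Tendsto (fun k => horoPt (v k)) l (𝓝 (horoPt vLim)) :=
    (continuous_horoPt.tendsto vLim).comp hv
  simpa using hhoro.sub ((hexp.pow 2).smul_const (Pi.single 0 1 : Fin (n + 1) → ℝ))

end

theorem lorentz_dynamical_lemma_general {ι : Type*} {l : Filter ι} {n : ℕ} (hn : n ≠ 0)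
    {s : ι → ℝ} {v : ι → Fin (n + 1) → ℝ} {a u : ι → LorentzGrp n}
    (ha : ∀ k, IsBoost (s k) (a k)) (hu : ∀ k, IsHoroTranslation (v k) (u k)) :
    (Tendsto (fun k => max (-s k) ‖v k‖) l atTop →
      ∃ lam : ι → ℝ, Tendsto (fun k => lam k • lorAct (a k * u k)⁻¹ (basePt n)) l
        (𝓝 (Pi.single 0 1))) ∧
    (Tendsto s l atTop → ∀ (vLim : Fin (n + 1) → ℝ) (uLim : LorentzGrp n),
      IsHoroTranslation vLim uLim → Tendsto v l (𝓝 vLim) →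
      (∃ lam : ι → ℝ, Tendsto (fun k => lam k • lorAct (a k * u k)⁻¹ (basePt n)) l
        (𝓝 (lorAct uLim⁻¹ (Pi.single (Fin.last n) 1)))) ∧
      ∀ c : ℝ, lorAct uLim⁻¹ (Pi.single (Fin.last n) 1) ≠ c • Pi.single 0 1) := by
  refine ⟨exists_tendsto_smul_single_zero hn ha hu, fun hs vLim uLim huLim hv => ?_⟩
  rw [huLim.lorAct_inv_single_last hn]
  exact ⟨exists_tendsto_smul_horoPt hn ha hu hs hv, horoPt_ne_smul_single_zero hn huLim.apply_last⟩

/-- dynamical lemma in `O(1,n)`. Let `a^s` act by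
`a^s e₁ = e^s e₁`, `a^s e_{n+1} = e^{-s} e_{n+1}`, `a^s eᵢ = eᵢ` otherwise, and for `v` supported
on the middle coordinates let `n(v)` act by
`n(v)(x₁, x', x_{n+1}) = (x₁ + ⟨v,x'⟩ − (⟨v,v⟩/2) x_{n+1}, x' − x_{n+1} v, x_{n+1})`.
Put `g_k = a^{s_k} ∘ n(v_k)`. Then, with `o = e₁ − e_{n+1}`:
(1) if `s_k → −∞`, then `λ_k • g_k⁻¹(o) → e₁` for suitable scalars `λ_k`;
(2) if `(s_k)` converges and `‖v_k‖ → ∞`, idem;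
(3) if `s_k → +∞` and `‖v_k‖ → ∞`, idem;
(4) if `s_k → +∞` and `v_k → v_∞`, then `λ_k • g_k⁻¹(o) → n(v_∞)⁻¹(e_{n+1})` for suitable
scalars, and `n(v_∞)⁻¹(e_{n+1})` is not proportional to `e₁`. -/
theorem lorentz_dynamical_lemma
    (n : ℕ) (hn : 2 ≤ n)
    (A : ℝ → LorentzGrp n)
    (hA : ∀ (s : ℝ) (x : Fin (n + 1) → ℝ), lorAct (A s) x = fun i =>
      if i = 0 then Real.exp s * x 0
      else if i = Fin.last n then Real.exp (-s) * x (Fin.last n)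
      else x i)
    (Nu : (Fin (n + 1) → ℝ) → LorentzGrp n)
    (hNu : ∀ v : Fin (n + 1) → ℝ, v 0 = 0 → v (Fin.last n) = 0 →
      ∀ x : Fin (n + 1) → ℝ, lorAct (Nu v) x = fun i =>
        if i = 0 then x 0 + (∑ j, v j * x j) - ((∑ j, v j * v j) / 2) * x (Fin.last n)
        else if i = Fin.last n then x (Fin.last n)
        else x i - x (Fin.last n) * v i)
    (s : ℕ → ℝ) (v : ℕ → Fin (n + 1) → ℝ)
    (hv : ∀ k, v k 0 = 0 ∧ v k (Fin.last n) = 0)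
    (g : ℕ → LorentzGrp n) (hg : ∀ k, g k = A (s k) * Nu (v k)) :
    (Tendsto s atTop atBot →
      ∃ lam : ℕ → ℝ, Tendsto (fun k => lam k • lorAct (g k)⁻¹ (basePt n)) atTop
        (𝓝 (Pi.single (0 : Fin (n + 1)) (1 : ℝ)))) ∧
    ((∃ sLim : ℝ, Tendsto s atTop (𝓝 sLim)) → Tendsto (fun k => ‖v k‖) atTop atTop →
      ∃ lam : ℕ → ℝ, Tendsto (fun k => lam k • lorAct (g k)⁻¹ (basePt n)) atTop
        (𝓝 (Pi.single (0 : Fin (n + 1)) (1 : ℝ)))) ∧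
    (Tendsto s atTop atTop → Tendsto (fun k => ‖v k‖) atTop atTop →
      ∃ lam : ℕ → ℝ, Tendsto (fun k => lam k • lorAct (g k)⁻¹ (basePt n)) atTop
        (𝓝 (Pi.single (0 : Fin (n + 1)) (1 : ℝ)))) ∧
    (Tendsto s atTop atTop → ∀ vLim : Fin (n + 1) → ℝ, vLim 0 = 0 → vLim (Fin.last n) = 0 →
      Tendsto v atTop (𝓝 vLim) →
      (∃ lam : ℕ → ℝ, Tendsto (fun k => lam k • lorAct (g k)⁻¹ (basePt n)) atTop
        (𝓝 (lorAct (Nu vLim)⁻¹ (Pi.single (Fin.last n) (1 : ℝ))))) ∧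
      ∀ c : ℝ, lorAct (Nu vLim)⁻¹ (Pi.single (Fin.last n) (1 : ℝ))
        ≠ c • (Pi.single (0 : Fin (n + 1)) (1 : ℝ) : Fin (n + 1) → ℝ)) := by
  obtain rfl : g = fun k => A (s k) * Nu (v k) := funext hg
  obtain ⟨to_single_zero, to_horoPt⟩ := lorentz_dynamical_lemma_general (l := atTop) (by omega)
    (fun k => hA (s k)) (fun k => ⟨(hv k).1, (hv k).2, hNu (v k) (hv k).1 (hv k).2⟩)
  exact ⟨fun hs => to_single_zero
      (tendsto_atTop_mono (fun k => le_max_left _ _) (tendsto_neg_atBot_atTop.comp hs)),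
    fun _ hnorm => to_single_zero (tendsto_atTop_mono (fun k => le_max_right _ _) hnorm),
    fun _ hnorm => to_single_zero (tendsto_atTop_mono (fun k => le_max_right _ _) hnorm),
    fun hs vLim h₀ hₙ => to_horoPt hs vLim (Nu vLim) ⟨h₀, hₙ, hNu vLim h₀ hₙ⟩⟩
end
end

section
/- Let n ≥ 2, let q be the Lorentzian quadratic form q(x) = 2x₁x_{n+1} + x₂² + ⋯ + xₙ² on ℝ^{n+1}, and let ρ be a continuous representation of O(1,n) on a finite-dimensional real normed vector space V. Let w ∈ V be a vector fixed by the Cartan subgroup A = {a^s : s ∈ ℝ}, i.e. ρ(a^s)w = w for all s ∈ ℝ. Then the orbit {ρ(g)w : g ∈ O(1,n)} is a closed subset of V. -/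
open Matrix Filter Topology Bornology

noncomputable section

/-!
By the Iwasawa decomposition `O(1,n) = K U A`, with `K` compact and `U` the horospherical group at
`e₁`, the orbit of a vector `w` fixed by `A` is `K • (U • w)`, so it is enough that `U • w` is
closed. Conjugation by `A` dilates the vector group `U = {u x}`, so `P x = ρ(u x) w` satisfies
`ρ(a^s) (P x) = P (e^s • x)` and the stabilizer of `w` in `U` is a linear subspace; let `F` be a
complement.

It suffices that `P` is proper on `F`. Suppose that `P xᵢ` converges along some `xᵢ → ∞` in `F`.
Let `T = ρ(a^{-s})`, where `s > 0`, and `c = e^{-s}`. For suitable `mᵢ → ∞` the vectors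
`c ^ mᵢ • xᵢ` accumulate at some `t ≠ 0`, and `z = P t - P 0` is a limit of `T ^ mᵢ (P xᵢ - P 0)`,
while `T ^ m z = P (c ^ m • t) - P 0 → 0`. The generalized eigenvectors of the transpose of `T` with
eigenvalue `|μ| < 1` vanish at `z` by the first property, those with `|μ| ≥ 1` by the second. Hence
`z = 0` and `t` stabilizes `w`, contradicting `t ∈ F`.
-/

theorem tendsto_zero_of_le_mul_add {a b : ℕ → ℝ} {q : ℝ} (ha : ∀ n, 0 ≤ a n) (hq0 : 0 ≤ q)
    (hq1 : q < 1) (hab : ∀ n, a (n + 1) ≤ q * a n + b n) (hb : Tendsto b atTop (𝓝 0)) :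
    Tendsto a atTop (𝓝 0) := by
  refine tendsto_order.2 ⟨fun c hc => .of_forall fun n => hc.trans_le (ha n), fun ε hε => ?_⟩
  obtain ⟨N, hN⟩ := eventually_atTop.1
    (hb.eventually_lt_const (mul_pos (half_pos hε) (sub_pos.2 hq1)))
  have hgeom : ∀ j, a (j + N) ≤ q ^ j * a N + ε / 2 := by
    intro j
    induction j with
    | zero => simp [(half_pos hε).le]
    | succ j ih =>
      calc a (j + 1 + N) ≤ q * a (j + N) + b (j + N) := by
            simpa only [Nat.add_right_comm] using hab (j + N)
        _ ≤ q * (q ^ j * a N + ε / 2) + ε / 2 * (1 - q) := by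
            gcongr
            exact (hN _ (Nat.le_add_left N j)).le
        _ = q ^ (j + 1) * a N + ε / 2 := by ring
  have hlim : Tendsto (fun j => q ^ j * a N + ε / 2) atTop (𝓝 (ε / 2)) := by
    simpa using ((tendsto_pow_atTop_nhds_zero_of_lt_one hq0 hq1).mul_const (a N)).add_const (ε / 2)
  have hshift : ∀ᶠ j in atTop, a (j + N) < ε :=
    (hlim.eventually_lt_const (half_lt_self hε)).mono fun j hj => (hgeom j).trans_lt hj
  rwa [← map_add_atTop_eq_nat N]

section LinearDynamics

variable {V : Type*} [NormedAddCommGroup V] [NormedSpace ℝ V]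

/-- The transpose `l ↦ l ∘ T` of a real operator. It acts on complex-valued functionals so that its
generalized eigenspaces span. -/
def complexTranspose (T : V →L[ℝ] V) : Module.End ℂ (V →L[ℝ] ℂ) where
  toFun l := l.comp T
  map_add' _ _ := rfl
  map_smul' _ _ := rfl

theorem apply_pow_succ_eq_mul_add (T : V →L[ℝ] V) (μ : ℂ) (l : V →L[ℝ] ℂ) (n : ℕ) (v : V) :
    l ((T ^ (n + 1)) v) =
      μ * l ((T ^ n) v) + (complexTranspose T - μ • 1) l ((T ^ n) v) := by
  rw [pow_succ']
  exact (add_sub_cancel _ _).symm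

theorem tendsto_comp_pow_of_norm_lt_one (T : V →L[ℝ] V) {μ : ℂ} (hμ : ‖μ‖ < 1)
    {l : V →L[ℝ] ℂ} (hl : l ∈ (complexTranspose T).maxGenEigenspace μ) :
    Tendsto (fun n => l.comp (T ^ n)) atTop (𝓝 0) := by
  obtain ⟨j, hj⟩ := (Module.End.mem_maxGenEigenspace _ _ _).1 hl
  clear hl
  induction j generalizing l with
  | zero =>
    obtain rfl : l = 0 := hj
    simp
  | succ j ih =>
    have hrest := ih (l := (complexTranspose T - μ • 1) l) (by rwa [pow_succ] at hj)
    refine tendsto_zero_iff_norm_tendsto_zero.2 (tendsto_zero_of_le_mul_add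
      (fun _ => norm_nonneg _) (norm_nonneg μ) hμ (fun n => ?_) (tendsto_norm_zero.comp hrest))
    have hrec : l.comp (T ^ (n + 1)) =
        μ • l.comp (T ^ n) + ((complexTranspose T - μ • 1) l).comp (T ^ n) :=
      ContinuousLinearMap.ext (apply_pow_succ_eq_mul_add T μ l n)
    rw [hrec, ← norm_smul]
    exact norm_add_le _ _

theorem apply_eq_zero_of_one_le_norm (T : V →L[ℝ] V) {μ : ℂ} (hμ : 1 ≤ ‖μ‖)
    {l : V →L[ℝ] ℂ} (hl : l ∈ (complexTranspose T).maxGenEigenspace μ) {z : V}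
    (hz : Tendsto (fun n => (T ^ n) z) atTop (𝓝 0)) : l z = 0 := by
  obtain ⟨j, hj⟩ := (Module.End.mem_maxGenEigenspace _ _ _).1 hl
  clear hl
  induction j generalizing l z with
  | zero =>
    obtain rfl : l = 0 := hj
    rfl
  | succ j ih =>
    have hrest : ∀ n, (complexTranspose T - μ • 1) l ((T ^ n) z) = 0 := fun n =>
      ih (by simpa only [pow_add, mul_apply_eq_comp] using (tendsto_add_atTop_iff_nat n).2 hz)
        (by rwa [pow_succ] at hj)
    have hgeom : ∀ n, l ((T ^ n) z) = μ ^ n * l z := by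
      intro n
      induction n with
      | zero => simp
      | succ n ihn => rw [apply_pow_succ_eq_mul_add T μ, hrest, ihn, add_zero, pow_succ', mul_assoc]
    have hlim : Tendsto (fun n => ‖l ((T ^ n) z)‖) atTop (𝓝 0) := by
      simpa using ((l.continuous.tendsto 0).comp hz).norm
    refine norm_le_zero_iff.1 (ge_of_tendsto' hlim fun n => ?_)
    rw [hgeom, norm_mul, norm_pow]
    exact le_mul_of_one_le_left (norm_nonneg _) (one_le_pow₀ hμ)

theorem eq_zero_of_tendsto_pow_apply [FiniteDimensional ℝ V] (T : V →L[ℝ] V) {ι : Type*}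
    {f : Filter ι} [f.NeBot] {m : ι → ℕ} (hm : Tendsto m f atTop) {y : ι → V}
    (hy : f.IsBoundedUnder (· ≤ ·) fun i => ‖y i‖) {z : V}
    (hyz : Tendsto (fun i => (T ^ m i) (y i)) f (𝓝 z))
    (hz : Tendsto (fun n => (T ^ n) z) atTop (𝓝 0)) : z = 0 := by
  have : FiniteDimensional ℂ (V →L[ℝ] ℂ) := FiniteDimensional.right ℝ ℂ (V →L[ℝ] ℂ)
  have hgen : ∀ (μ : ℂ), ∀ l ∈ (complexTranspose T).maxGenEigenspace μ, l z = 0 := by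
    intro μ l hl
    rcases lt_or_ge ‖μ‖ 1 with hμ | hμ
    · have hzero : Tendsto (fun i => l ((T ^ m i) (y i))) f (𝓝 0) :=
        ((tendsto_comp_pow_of_norm_lt_one T hμ hl).comp hm).op_zero_isBoundedUnder_le hy
          (fun L v => L v) fun L v => L.le_opNorm v
      exact tendsto_nhds_unique ((l.continuous.tendsto z).comp hyz) hzero
    · exact apply_eq_zero_of_one_le_norm T hμ hl hz
  have hall : ∀ l : V →L[ℝ] ℂ, l z = 0 := by
    intro l
    have hl : l ∈ ⨆ μ, (complexTranspose T).maxGenEigenspace μ := by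
      rw [Module.End.iSup_maxGenEigenspace_eq_top]
      trivial
    induction hl using Submodule.iSup_induction' with
    | mem μ l hl => exact hgen μ l hl
    | zero => rfl
    | add l l' _ _ hl hl' => simp [hl, hl']
  by_contra hne
  obtain ⟨l, hlz⟩ := SeparatingDual.exists_ne_zero (R := ℝ) hne
  exact hlz (Complex.ofReal_eq_zero.1 (hall (Complex.ofRealCLM.comp l)))

theorem pow_apply_sub_of_semiconj {F : Type*} [AddCommGroup F] [Module ℝ F]
    {P : F → V} {T : V →L[ℝ] V} {c : ℝ} (hT : ∀ x, T (P x) = P (c • x)) (m : ℕ) (x : F) :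
    (T ^ m) (P x - P 0) = P (c ^ m • x) - P 0 := by
  induction m with
  | zero => simp
  | succ m ih =>
    rw [pow_succ', mul_apply_eq_comp, ih, map_sub, hT, hT, smul_zero, smul_smul,
      ← pow_succ']

theorem exists_pow_smul_mem_shell {F : Type*} [NormedAddCommGroup F] [NormedSpace ℝ F] {c : ℝ}
    (hc0 : 0 < c) (hc1 : c < 1) (x : F) (hx : 1 ≤ ‖x‖) :
    ∃ m : ℕ, 1 ≤ ‖c ^ m • x‖ ∧ ‖c ^ m • x‖ ≤ c⁻¹ := by
  obtain ⟨m, hm, hm'⟩ := exists_nat_pow_near hx ((one_lt_inv₀ hc0).2 hc1)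
  have hcm : 0 < c ^ m := pow_pos hc0 m
  refine ⟨m, ?_⟩
  rw [norm_smul, Real.norm_of_nonneg hcm.le]
  constructor
  · rwa [inv_pow, inv_le_iff_one_le_mul₀' hcm] at hm
  · calc c ^ m * ‖x‖ ≤ c ^ m * c⁻¹ ^ (m + 1) := by gcongr
      _ = c⁻¹ := by rw [pow_succ, ← mul_assoc, ← mul_pow, mul_inv_cancel₀ hc0.ne', one_pow, one_mul]

theorem tendsto_atTop_of_pow_mul_le {ι : Type*} {f : Filter ι} {c C : ℝ} (hc0 : 0 < c)
    (hc1 : c ≤ 1) {r : ι → ℝ} (hr : Tendsto r f atTop) {m : ι → ℕ}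
    (hm : ∀ᶠ i in f, c ^ m i * r i ≤ C) : Tendsto m f atTop := by
  refine tendsto_atTop.2 fun N => ?_
  filter_upwards [hm, hr.eventually_gt_atTop (C / c ^ N), hr.eventually_ge_atTop 0]
    with i hi hri hri0
  by_contra! hlt
  refine hi.not_gt (((div_lt_iff₀' (pow_pos hc0 N)).1 hri).trans_le ?_)
  exact mul_le_mul_of_nonneg_right (pow_le_pow_of_le_one hc0.le hc1 hlt.le) hri0

variable {F : Type*} [NormedAddCommGroup F] [NormedSpace ℝ F] [FiniteDimensional ℝ F] {P : F → V}
  {T : V →L[ℝ] V} {c : ℝ}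

theorem not_tendsto_nhds_of_semiconj_smul [FiniteDimensional ℝ V] (hP : Continuous P) (hc0 : 0 < c)
    (hc1 : c < 1) (hT : ∀ x, T (P x) = P (c • x)) (hinj : ∀ x, P x = P 0 → x = 0)
    {U : Ultrafilter F} (hU : U ≤ cobounded F) (v : V) : ¬ Tendsto P U (𝓝 v) := by
  intro hv
  have hnorm : Tendsto norm (U : Filter F) atTop := tendsto_norm_cobounded_atTop.mono_left hU
  choose! m hm using exists_pow_smul_mem_shell (F := F) hc0 hc1
  have hshell : ∀ᶠ x in (U : Filter F), 1 ≤ ‖c ^ m x • x‖ ∧ ‖c ^ m x • x‖ ≤ c⁻¹ :=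
    (hnorm.eventually_ge_atTop 1).mono hm
  have hmtop : Tendsto m U atTop := by
    refine tendsto_atTop_of_pow_mul_le (C := c⁻¹) hc0 hc1.le hnorm (hshell.mono fun x hx => ?_)
    simpa only [norm_smul, Real.norm_of_nonneg (pow_pos hc0 _).le] using hx.2
  obtain ⟨t, -, ht⟩ := (isCompact_closedBall (0 : F) c⁻¹).ultrafilter_le_nhds'
    (U.map fun x => c ^ m x • x) (hshell.mono fun x hx => by simpa using hx.2)
  replace ht : Tendsto (fun x => c ^ m x • x) U (𝓝 t) := ht
  have ht1 : 1 ≤ ‖t‖ := ge_of_tendsto ht.norm (hshell.mono fun x hx => hx.1)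
  have hPt : P t - P 0 = 0 := by
    refine eq_zero_of_tendsto_pow_apply T hmtop (hv.sub_const (P 0)).norm.isBoundedUnder_le
      ((((hP.tendsto t).comp ht).sub_const (P 0)).congr fun x =>
        (pow_apply_sub_of_semiconj hT _ x).symm) ?_
    have hct : Tendsto (fun n => c ^ n • t) atTop (𝓝 0) := by
      simpa using (tendsto_pow_atTop_nhds_zero_of_lt_one hc0.le hc1).smul_const t
    simpa [pow_apply_sub_of_semiconj hT] using ((hP.tendsto 0).comp hct).sub_const (P 0)
  have ht0 : t = 0 := hinj t (sub_eq_zero.1 hPt)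
  norm_num [ht0] at ht1

theorem isProperMap_of_semiconj_smul [FiniteDimensional ℝ V] (hP : Continuous P) (hc0 : 0 < c)
    (hc1 : c < 1) (hT : ∀ x, T (P x) = P (c • x)) (hinj : ∀ x, P x = P 0 → x = 0) :
    IsProperMap P := by
  refine isProperMap_iff_ultrafilter_of_t2.2 ⟨hP, fun U v hv => ?_⟩
  have hU : Disjoint (U : Filter F) (cobounded F) := Ultrafilter.disjoint_iff_not_le.2 fun hU =>
    not_tendsto_nhds_of_semiconj_smul hP hc0 hc1 hT hinj hU v hv
  obtain ⟨s, hsU, hs⟩ := disjoint_cobounded_iff.1 hU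
  obtain ⟨x, -, hx⟩ := hs.isCompact_closure.ultrafilter_le_nhds' U
    (mem_of_superset hsU subset_closure)
  exact ⟨x, hx⟩

end LinearDynamics

section Orbits

variable {V : Type*} [NormedAddCommGroup V] [NormedSpace ℝ V]

/-- The vectors of `W` that fix `w` in a linear representation `R` of the additive group `W`; the
dilations `D` make this additive subgroup a linear subspace. -/
def fixingSubmodule {W : Type*} [AddCommGroup W] [Module ℝ W]
    (R : Multiplicative W →* (V →L[ℝ] V)) (D : ℝ → V →L[ℝ] V) (w : V)
    (hD : ∀ c > 0, ∀ x, D c (R (.ofAdd x) w) = R (.ofAdd (c • x)) w) : Submodule ℝ W where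
  carrier := {x | R (.ofAdd x) w = w}
  zero_mem' := by simp
  add_mem' {x y} hx hy := by
    rw [Set.mem_ofPred_eq] at hx hy ⊢
    rw [ofAdd_add, map_mul, mul_apply_eq_comp, hy, hx]
  smul_mem' := by
    have hpos : ∀ c : ℝ, 0 < c → ∀ x, R (.ofAdd x) w = w → R (.ofAdd (c • x)) w = w := by
      intro c hc x hx
      rw [← hD c hc, hx]
      simpa using hD c hc 0
    intro c x (hx : R (.ofAdd x) w = w)
    rcases lt_trichotomy c 0 with hc | rfl | hc
    · have hneg : R (.ofAdd (-x)) w = w := by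
        nth_rw 1 [← hx]
        rw [← mul_apply_eq_comp, ← map_mul, ← ofAdd_add]
        simp
      simpa using hpos (-c) (neg_pos.2 hc) (-x) hneg
    · simp
    · exact hpos c hc x hx

variable {W : Type*} [NormedAddCommGroup W] [NormedSpace ℝ W]

theorem isClosed_range_of_dilation [FiniteDimensional ℝ W] [FiniteDimensional ℝ V]
    (R : Multiplicative W →* (V →L[ℝ] V)) (D : ℝ → V →L[ℝ] V) {w : V}
    (hR : Continuous fun x => R (.ofAdd x) w)
    (hD : ∀ c > 0, ∀ x, D c (R (.ofAdd x) w) = R (.ofAdd (c • x)) w) :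
    IsClosed (Set.range fun x => R (.ofAdd x) w) := by
  obtain ⟨F, hF⟩ := (fixingSubmodule R D w hD).exists_isCompl
  have hproper : IsProperMap fun x : F => R (.ofAdd (x : W)) w := by
    refine isProperMap_of_semiconj_smul (c := 2⁻¹) (T := D 2⁻¹) (by fun_prop) (by norm_num)
      (by norm_num) (fun x => hD 2⁻¹ (by norm_num) x) fun x hx => ?_
    have hxfix : (x : W) ∈ fixingSubmodule R D w hD := hx.trans (by simp)
    exact Subtype.ext (Submodule.disjoint_def.1 hF.disjoint x hxfix x.2)
  convert! hproper.isClosed_range using 1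
  refine subset_antisymm ?_ (Set.range_subset_iff.2 fun x => Set.mem_range_self (x : W))
  rintro _ ⟨x, rfl⟩
  obtain ⟨e, he, y, hy, rfl⟩ :=
    Submodule.mem_sup.1 (hF.sup_eq_top ▸ Submodule.mem_top : x ∈ fixingSubmodule R D w hD ⊔ F)
  refine ⟨⟨y, hy⟩, ?_⟩
  simp only [add_comm e y, ofAdd_add, map_mul, mul_apply_eq_comp]
  exact congrArg _ (Eq.symm he)

variable {G : Type*} [Group G] [TopologicalSpace G] [ContinuousInv G]

theorem isClosed_orbit_of_isCompact_of_dilation [FiniteDimensional ℝ W] [FiniteDimensional ℝ V]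
    {ρ : G →* (V →L[ℝ] V)} (hρ : Continuous ρ) {K : Set G} (hK : IsCompact K)
    {u : Multiplicative W →* G} (hu : Continuous u) {A : ℝ → G}
    (hAu : ∀ s x, A s * u (.ofAdd x) = u (.ofAdd (Real.exp s • x)) * A s)
    (hKuA : ∀ g, ∃ k ∈ K, ∃ x s, g * A s = k * u (.ofAdd x))
    {w : V} (hw : ∀ s, ρ (A s) w = w) : IsClosed (Set.range fun g => ρ g w) := by
  have hclosed : IsClosed (Set.range fun x => ρ (u (.ofAdd x)) w) := by
    refine isClosed_range_of_dilation (ρ.comp u) (fun c => ρ (A (Real.log c)))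
      ((hρ.comp (hu.comp continuous_ofAdd)).clm_apply continuous_const) fun c hc x => ?_
    rw [MonoidHom.comp_apply, ← mul_apply_eq_comp, ← map_mul, hAu, map_mul, mul_apply_eq_comp, hw,
      Real.exp_log hc, MonoidHom.comp_apply]
  let _ : MulAction G V := .compHom V ρ
  have : ContinuousSMul G V := ⟨(hρ.comp continuous_fst).clm_apply continuous_snd⟩
  convert! hclosed.smul_left_of_isCompact hK using 1
  ext v
  simp only [Set.mem_range, Set.mem_smul]
  constructor
  · rintro ⟨g, rfl⟩
    obtain ⟨k, hk, x, s, hg⟩ := hKuA g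
    refine ⟨k, hk, _, ⟨x, rfl⟩, ?_⟩
    change ρ k (ρ (u _) w) = ρ g w
    rw [← mul_apply_eq_comp, ← map_mul, ← hg, map_mul, mul_apply_eq_comp, hw]
  · rintro ⟨k, -, _, ⟨x, rfl⟩, rfl⟩
    exact ⟨k * u (.ofAdd x), by rw [map_mul]; rfl⟩

end Orbits

section Eichler

variable {K M : Type*} [Field K] [AddCommGroup M] [Module K M]

/-- The Eichler transformation (Siegel transvection) of a bilinear form `B`. It is an
isometry when `B` is symmetric, `e` is isotropic and `v` is orthogonal to `e`, but is defined for
all `B`, `e` and `v`. -/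
def eichler (B : LinearMap.BilinForm K M) (e v : M) : M →ₗ[K] M :=
  LinearMap.id + (B e).smulRight v - (B v + (B v v / 2) • B e).smulRight e

variable {B : LinearMap.BilinForm K M} {e v v' : M}

theorem eichler_apply (y : M) :
    eichler B e v y = y + B e y • v - (B v y + B v v / 2 * B e y) • e := rfl

theorem eichler_zero : eichler B e 0 = 1 := by
  ext y
  simp [eichler_apply]

theorem eichler_smul_left (c : K) : eichler B (c • e) v = eichler B e (c • v) := by
  ext y
  simp only [eichler_apply, map_smul, LinearMap.smul_apply, smul_eq_mul]
  module

theorem map_eichler {M' : Type*} [AddCommGroup M'] [Module K M'] {B' : LinearMap.BilinForm K M'}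
    {f : M →ₗ[K] M'} (hf : ∀ x y, B' (f x) (f y) = B x y) (y : M) :
    f (eichler B e v y) = eichler B' (f e) (f v) (f y) := by
  simp only [eichler_apply, map_sub, map_add, map_smul, hf]

variable [NeZero (2 : K)]

theorem eichler_mul (hB : B.IsSymm) (he : B e e = 0) (hv : B e v = 0) (hv' : B e v' = 0) :
    eichler B e v * eichler B e v' = eichler B e (v + v') := by
  have hve : B v e = 0 := (hB.eq v e).trans hv
  ext y
  simp only [Module.End.mul_apply, eichler_apply, map_add, map_sub, map_smul, LinearMap.add_apply,
    he, hv', hve, hB.eq v' v]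
  match_scalars <;> field_simp <;> ring

theorem eichler_isometry (hB : B.IsSymm) (he : B e e = 0) (hv : B e v = 0) (y : M) :
    B (eichler B e v y) (eichler B e v y) = B y y := by
  have hve : B v e = 0 := (hB.eq v e).trans hv
  simp only [eichler_apply, map_add, map_sub, map_smul, LinearMap.add_apply, LinearMap.sub_apply,
    LinearMap.smul_apply, smul_eq_mul, he, hv, hve, hB.eq y e, hB.eq y v]
  field_simp
  ring

end Eichler

section UnitaryGroup

variable {ι 𝕜 : Type*} [Fintype ι] [DecidableEq ι] [RCLike 𝕜]

theorem isCompact_unitaryGroup : IsCompact (unitaryGroup ι 𝕜 : Set (Matrix ι ι 𝕜)) :=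
  .of_isClosed_subset
    (isCompact_univ_pi fun _ => isCompact_univ_pi fun _ => isCompact_closedBall (0 : 𝕜) 1)
    isClosed_unitary
    fun _ hU i _ j _ => mem_closedBall_zero_iff.2 (entry_norm_bound_of_unitary hU i j)

theorem isCompact_setOf_val_mem_unitaryGroup :
    IsCompact {g : GL ι 𝕜 | (g : Matrix ι ι 𝕜) ∈ unitaryGroup ι 𝕜} := by
  have : CompactSpace (unitaryGroup ι 𝕜) := isCompact_iff_compactSpace.1 isCompact_unitaryGroup
  have hcont : Continuous (Unitary.toUnits : unitaryGroup ι 𝕜 →* GL ι 𝕜) :=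
    Units.continuous_iff.2 ⟨continuous_subtype_val, continuous_subtype_val.comp continuous_inv⟩
  convert! isCompact_range hcont using 1
  ext g
  exact ⟨fun hg => ⟨⟨g, hg⟩, Units.ext rfl⟩, fun ⟨U, hU⟩ => hU ▸ U.2⟩

end UnitaryGroup

section LorentzForm

variable {n : ℕ}

variable (n) in
/-- The polar form `lorB n` as a bundled bilinear form. -/
def lorForm : LinearMap.BilinForm ℝ (Fin (n + 1) → ℝ) :=
  LinearMap.mk₂ ℝ (lorB n)
    (fun x x' y => by
      simp only [lorB, Pi.add_apply, add_mul, ite_add_zero, Finset.sum_add_distrib]; ring)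
    (fun c x y => by
      simp only [lorB, Pi.smul_apply, smul_eq_mul, mul_assoc, mul_add, Finset.mul_sum, mul_ite,
        mul_zero])
    (fun x y y' => by
      simp only [lorB, Pi.add_apply, mul_add, ite_add_zero, Finset.sum_add_distrib]; ring)
    (fun c x y => by
      simp only [lorB, Pi.smul_apply, smul_eq_mul, mul_left_comm _ c, mul_add, Finset.mul_sum,
        mul_ite, mul_zero])

theorem lorForm_apply (x y : Fin (n + 1) → ℝ) :
    lorForm n x y = x 0 * y (Fin.last n) + x (Fin.last n) * y 0 +
      ∑ i : Fin (n + 1), if i ≠ 0 ∧ i ≠ Fin.last n then x i * y i else 0 := rfl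

theorem lorForm_isSymm : (lorForm n).IsSymm :=
  ⟨fun x y => by simp only [lorForm_apply, mul_comm, add_comm]⟩

theorem lorForm_self (x : Fin (n + 1) → ℝ) : lorForm n x x = lorQ n x := by
  simp only [lorForm_apply, lorQ, pow_two]
  ring

theorem lorQ_smul (c : ℝ) (x : Fin (n + 1) → ℝ) : lorQ n (c • x) = c * c * lorQ n x := by
  simp only [← lorForm_self, map_smul, LinearMap.smul_apply, smul_eq_mul, mul_assoc]

theorem continuous_lorForm :
    Continuous fun p : (Fin (n + 1) → ℝ) × (Fin (n + 1) → ℝ) => lorForm n p.1 p.2 := by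
  simp only [lorForm_apply, ← Finset.sum_filter]
  fun_prop

theorem continuous_lorQ : Continuous (lorQ n) := by
  simp only [← funext lorForm_self]
  exact continuous_lorForm.comp (continuous_id.prodMk continuous_id)

theorem continuous_eichler_lorForm (e y : Fin (n + 1) → ℝ) :
    Continuous fun v => eichler (lorForm n) e v y := by
  have hvy := continuous_lorForm.comp (continuous_id.prodMk (continuous_const (y := y)))
  have hvv : Continuous fun v => lorForm n v v := by simpa only [lorForm_self] using continuous_lorQ
  simp only [Function.comp_def, id] at hvy
  simp only [eichler_apply]
  fun_prop

theorem lorForm_apply_of_middle_eq_zero (x : Fin (n + 1) → ℝ) {y : Fin (n + 1) → ℝ}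
    (hy : ∀ i, i ≠ 0 → i ≠ Fin.last n → y i = 0) :
    lorForm n x y = x 0 * y (Fin.last n) + x (Fin.last n) * y 0 := by
  rw [lorForm_apply, add_eq_left]
  refine Finset.sum_eq_zero fun i _ => ite_eq_right_iff.2 fun hi => ?_
  rw [hy i hi.1 hi.2, mul_zero]

theorem basePt_last [NeZero n] : basePt n (Fin.last n) = -1 := by
  simp [basePt, Fin.last_pos'.ne']

theorem lorForm_basePt [NeZero n] (x : Fin (n + 1) → ℝ) :
    lorForm n x (basePt n) = x (Fin.last n) - x 0 := by
  have hzero : basePt n 0 = 1 := if_pos rfl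
  rw [lorForm_apply_of_middle_eq_zero x fun i h0 hlast => by simp [basePt, h0, hlast],
    basePt_last, hzero]
  ring

theorem lorQ_basePt [NeZero n] : lorQ n (basePt n) = -2 := by
  rw [← lorForm_self, lorForm_basePt, basePt_last]
  norm_num [basePt]

theorem lorForm_single_zero [NeZero n] (y : Fin (n + 1) → ℝ) :
    lorForm n (Pi.single 0 1) y = y (Fin.last n) := by
  rw [lorForm_isSymm.eq,
    lorForm_apply_of_middle_eq_zero y fun i h0 _ => Pi.single_eq_of_ne h0 1]
  simp [Fin.last_pos'.ne']

theorem dotProduct_eq_lorForm [NeZero n] (x y : Fin (n + 1) → ℝ) :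
    x ⬝ᵥ y = lorForm n x y + lorForm n x (basePt n) * lorForm n y (basePt n) := by
  have hlast : Fin.last n ≠ 0 := Fin.last_pos'.ne'
  have hsplit : ∀ i, x i * y i = (if i ≠ 0 ∧ i ≠ Fin.last n then x i * y i else 0) +
      (if i = 0 then x i * y i else 0) + if i = Fin.last n then x i * y i else 0 := by
    intro i
    rcases eq_or_ne i 0 with rfl | hi
    · simp [hlast.symm]
    · by_cases hi' : i = Fin.last n <;> simp [hi, hi', hlast]
  rw [dotProduct, Finset.sum_congr rfl fun i _ => hsplit i, Finset.sum_add_distrib,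
    Finset.sum_add_distrib, Finset.sum_ite_eq', Finset.sum_ite_eq', if_pos (Finset.mem_univ _),
    if_pos (Finset.mem_univ _), lorForm_basePt, lorForm_basePt, lorForm_apply]
  ring

end LorentzForm

section LorentzGroup

variable {n : ℕ}

variable (n) in
/-- The standard representation of `O(1,n)` on `ℝ^{n+1}`, which is `lorAct` as a homomorphism. -/
def lorRep : Representation ℝ (LorentzGrp n) (Fin (n + 1) → ℝ) :=
  (toLinAlgEquiv' : Matrix (Fin (n + 1)) (Fin (n + 1)) ℝ ≃ₐ[ℝ] _).toMonoidHom.comp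
    ((Units.coeHom _).comp (LorentzGrp n).subtype)

theorem lorRep_apply (g : LorentzGrp n) (x : Fin (n + 1) → ℝ) :
    lorRep n g x = ((g : GL (Fin (n + 1)) ℝ) : Matrix (Fin (n + 1)) (Fin (n + 1)) ℝ) *ᵥ x := rfl

theorem lorRep_injective : Function.Injective (lorRep n) :=
  toLinAlgEquiv'.injective.comp (Units.val_injective.comp Subtype.val_injective)

theorem lorQ_lorRep (g : LorentzGrp n) (x : Fin (n + 1) → ℝ) :
    lorQ n (lorRep n g x) = lorQ n x := g.2 x

theorem lorForm_lorRep (g : LorentzGrp n) (x y : Fin (n + 1) → ℝ) :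
    lorForm n (lorRep n g x) (lorRep n g y) = lorForm n x y := by
  rw [lorForm_isSymm.polarization, lorForm_isSymm.polarization x, ← map_add]
  simp only [lorForm_self, lorQ_lorRep]

theorem isClosed_lorentzGrp : IsClosed (LorentzGrp n : Set (GL (Fin (n + 1)) ℝ)) := by
  change IsClosed {g : GL (Fin (n + 1)) ℝ | ∀ x, lorQ n (g.val *ᵥ x) = lorQ n x}
  simp only [Set.ofPred_forall]
  exact isClosed_iInter fun x => isClosed_eq
    (continuous_lorQ.comp (Units.continuous_val.matrix_mulVec continuous_const)) continuous_const

variable (n) in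
/-- The maximal compact subgroup of `O(1,n)` of orthogonal matrices, the compact factor of the
Iwasawa decomposition; only its underlying set is needed. -/
def maximalCompact : Set (LorentzGrp n) :=
  {g | ((g : GL (Fin (n + 1)) ℝ) : Matrix (Fin (n + 1)) (Fin (n + 1)) ℝ) ∈
    orthogonalGroup (Fin (n + 1)) ℝ}

theorem isCompact_maximalCompact : IsCompact (maximalCompact n) :=
  isClosed_lorentzGrp.isClosedEmbedding_subtypeVal.isCompact_preimage
    isCompact_setOf_val_mem_unitaryGroup

theorem mem_maximalCompact [NeZero n] {g : LorentzGrp n} {ε : ℝ}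
    (hg : lorRep n g (basePt n) = ε • basePt n) : g ∈ maximalCompact n := by
  have hε : ε * ε = 1 := by
    have hnorm := lorQ_lorRep g (basePt n)
    rw [hg, lorQ_smul, lorQ_basePt] at hnorm
    linarith
  have hbase : ∀ x, lorForm n (lorRep n g x) (basePt n) = ε * lorForm n x (basePt n) := by
    intro x
    rw [← lorForm_lorRep g x, hg, map_smul, smul_eq_mul, ← mul_assoc, hε, one_mul]
  have hdot : ∀ x y, lorRep n g x ⬝ᵥ lorRep n g y = x ⬝ᵥ y := by
    intro x y
    rw [dotProduct_eq_lorForm, dotProduct_eq_lorForm x, hbase, hbase, lorForm_lorRep,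
      mul_mul_mul_comm, hε, one_mul]
  rw [maximalCompact, Set.mem_ofPred_eq, mem_orthogonalGroup_iff']
  ext i j
  simpa [lorRep_apply, mul_apply, dotProduct, one_apply, Pi.single_apply, eq_comm] using
    hdot (Pi.single i 1) (Pi.single j 1)

end LorentzGroup

section Iwasawa

variable {n : ℕ}

variable (n) in
/-- The span of the middle basis vectors `e₂, …, eₙ`, which parametrizes the horospherical
group. -/
def middle : Submodule ℝ (Fin (n + 1) → ℝ) where
  carrier := {x | x 0 = 0 ∧ x (Fin.last n) = 0}
  zero_mem' := ⟨rfl, rfl⟩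
  add_mem' := by
    rintro x y ⟨hx, hx'⟩ ⟨hy, hy'⟩
    exact ⟨by simp [hx, hy], by simp [hx', hy']⟩
  smul_mem' := by
    rintro c x ⟨hx, hx'⟩
    exact ⟨by simp [hx], by simp [hx']⟩

theorem lorForm_basePt_of_mem_middle [NeZero n] {x : Fin (n + 1) → ℝ} (hx : x ∈ middle n) :
    lorForm n x (basePt n) = 0 := by
  rw [lorForm_basePt, hx.1, hx.2, sub_zero]

theorem lorForm_single_zero_of_mem_middle [NeZero n] {x : Fin (n + 1) → ℝ} (hx : x ∈ middle n) :
    lorForm n (Pi.single 0 1) x = 0 := by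
  rw [lorForm_single_zero, hx.2]

theorem lorForm_single_zero_single_zero [NeZero n] :
    lorForm n (Pi.single 0 1) (Pi.single 0 1) = 0 := by
  rw [lorForm_single_zero, Pi.single_eq_of_ne Fin.last_pos'.ne']

variable (n) in
/-- The Eichler transformations attached to `e₁` and the middle vectors, as a homomorphism into
the linear maps of `ℝ^{n+1}`; this is `horospherical` before passing to matrices. -/
def eichlerHom [NeZero n] : Multiplicative (middle n) →* Module.End ℝ (Fin (n + 1) → ℝ) where
  toFun x := eichler (lorForm n) (Pi.single 0 1) x.toAdd
  map_one' := eichler_zero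
  map_mul' x y := (eichler_mul lorForm_isSymm lorForm_single_zero_single_zero
    (lorForm_single_zero_of_mem_middle x.toAdd.2)
    (lorForm_single_zero_of_mem_middle y.toAdd.2)).symm

variable (n) in
/-- The horospherical subgroup of `O(1,n)` at `e₁`, the unipotent factor of the Iwasawa
decomposition, parametrized by the middle vectors. -/
def horospherical [NeZero n] : Multiplicative (middle n) →* LorentzGrp n :=
  ((LinearMap.toMatrixAlgEquiv'.toMonoidHom.comp (eichlerHom n)).toHomUnits).codRestrict _
    fun x y => by
      change lorQ n (LinearMap.toMatrixAlgEquiv' (eichlerHom n x) *ᵥ y) = lorQ n y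
      rw [← toLinAlgEquiv'_apply, toLinAlgEquiv'_toMatrixAlgEquiv', ← lorForm_self, ← lorForm_self]
      exact eichler_isometry lorForm_isSymm lorForm_single_zero_single_zero
        (lorForm_single_zero_of_mem_middle x.toAdd.2) y

theorem lorRep_horospherical [NeZero n] (x : middle n) :
    lorRep n (horospherical n (.ofAdd x)) = eichler (lorForm n) (Pi.single 0 1) x :=
  toLinAlgEquiv'_toMatrixAlgEquiv' (eichlerHom n (.ofAdd x))

theorem continuous_horospherical [NeZero n] : Continuous (horospherical n) := by
  have hcont : Continuous fun x : Multiplicative (middle n) =>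
      LinearMap.toMatrixAlgEquiv' (eichlerHom n x) := by
    refine continuous_matrix fun i j => ?_
    simp only [LinearMap.toMatrixAlgEquiv'_apply]
    exact (continuous_apply i).comp ((continuous_eichler_lorForm _ _).comp
      (continuous_subtype_val.comp continuous_toAdd))
  exact (Units.continuous_iff.2 ⟨hcont, hcont.comp continuous_inv⟩).subtype_mk _

/-- `A s` is the element `a^s` of the Cartan subgroup, for every `s`. -/
def IsCartan (A : ℝ → LorentzGrp n) : Prop :=
  ∀ (s : ℝ) (x : Fin (n + 1) → ℝ), lorAct (A s) x = fun i =>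
    if i = 0 then Real.exp s * x 0
    else if i = Fin.last n then Real.exp (-s) * x (Fin.last n)
    else x i

variable {A : ℝ → LorentzGrp n}

theorem IsCartan.lorRep_apply (hA : IsCartan A) (s : ℝ) (x : Fin (n + 1) → ℝ) :
    lorRep n (A s) x = fun i => if i = 0 then Real.exp s * x 0
      else if i = Fin.last n then Real.exp (-s) * x (Fin.last n) else x i := hA s x

theorem IsCartan.lorRep_single_zero (hA : IsCartan A) (s : ℝ) :
    lorRep n (A s) (Pi.single 0 1) = Real.exp s • Pi.single 0 1 := by
  rw [hA.lorRep_apply]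
  ext i
  by_cases h0 : i = 0
  · simp [h0]
  · by_cases hi : i = Fin.last n <;> simp_all

theorem IsCartan.lorRep_eq_self (hA : IsCartan A) (s : ℝ) {x : Fin (n + 1) → ℝ}
    (hx : x ∈ middle n) : lorRep n (A s) x = x := by
  rw [hA.lorRep_apply]
  ext i
  split_ifs with h0 hlast
  · rw [h0, hx.1, mul_zero]
  · rw [hlast, hx.2, mul_zero]
  · rfl

theorem IsCartan.mul_horospherical [NeZero n] (hA : IsCartan A) (s : ℝ) (x : middle n) :
    A s * horospherical n (.ofAdd x) = horospherical n (.ofAdd (Real.exp s • x)) * A s := by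
  refine lorRep_injective (LinearMap.ext fun y => ?_)
  rw [map_mul, map_mul, Module.End.mul_apply, Module.End.mul_apply, lorRep_horospherical,
    lorRep_horospherical, map_eichler (lorForm_lorRep (A s)), hA.lorRep_single_zero,
    hA.lorRep_eq_self s x.2, eichler_smul_left]
  rfl

theorem lorRep_horospherical_basePt [NeZero n] (x : middle n) :
    lorRep n (horospherical n (.ofAdd x)) (basePt n) =
      basePt n - (x : Fin (n + 1) → ℝ) + (lorQ n x / 2) • Pi.single 0 1 := by
  rw [lorRep_horospherical, eichler_apply, lorForm_single_zero, lorForm_basePt_of_mem_middle x.2,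
    lorForm_self, basePt_last]
  module

theorem lorQ_eq_add_lorQ_middle {v y : Fin (n + 1) → ℝ} (hy : y ∈ middle n)
    (hyv : ∀ i, i ≠ 0 → i ≠ Fin.last n → y i = -v i) :
    lorQ n v = 2 * v 0 * v (Fin.last n) + lorQ n y := by
  have hsq : ∀ i, (if i ≠ 0 ∧ i ≠ Fin.last n then y i ^ 2 else 0) =
      if i ≠ 0 ∧ i ≠ Fin.last n then v i ^ 2 else 0 := fun i => by
    split_ifs with hi
    · rw [hyv i hi.1 hi.2, neg_sq]
    · rfl
  rw [lorQ, lorQ, Finset.sum_congr rfl fun i _ => hsq i, hy.1, mul_zero, zero_mul, zero_add]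

theorem IsCartan.exists_lorRep_horospherical_basePt_eq [NeZero n] (hA : IsCartan A)
    {v : Fin (n + 1) → ℝ} (hv : lorQ n v = -2) (hneg : v (Fin.last n) < 0) :
    ∃ s x, lorRep n (A s) (lorRep n (horospherical n (.ofAdd x)) (basePt n)) = v := by
  have hlast : Fin.last n ≠ 0 := Fin.last_pos'.ne'
  let y : Fin (n + 1) → ℝ := fun i => if i = 0 ∨ i = Fin.last n then 0 else -v i
  have hy : y ∈ middle n := by simp [y, middle]
  have hyQ : lorQ n y = -2 - 2 * v 0 * v (Fin.last n) := by
    have hyv : ∀ i, i ≠ 0 → i ≠ Fin.last n → y i = -v i := fun i h0 hi => by simp [y, h0, hi]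
    linarith [lorQ_eq_add_lorQ_middle hy hyv]
  refine ⟨-Real.log (-v (Fin.last n)), ⟨y, hy⟩, ?_⟩
  have hexp : Real.exp (Real.log (-v (Fin.last n))) = -v (Fin.last n) :=
    Real.exp_log (neg_pos.2 hneg)
  rw [lorRep_horospherical_basePt, hA.lorRep_apply, hyQ, neg_neg, Real.exp_neg, hexp]
  ext i
  by_cases h0 : i = 0
  · subst h0
    have hne : v (Fin.last n) ≠ 0 := hneg.ne
    simp only [basePt, hy.1, Pi.add_apply, Pi.sub_apply, Pi.smul_apply, Pi.single_eq_same,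
      smul_eq_mul, mul_one, sub_zero, if_true, inv_neg, neg_mul]
    field_simp
    ring
  · by_cases hi : i = Fin.last n
    · subst hi
      simp [basePt, hy.2, hlast]
    · simp [basePt, y, h0, hi]

theorem last_ne_zero_of_lorQ_neg {v : Fin (n + 1) → ℝ} (hv : lorQ n v < 0) :
    v (Fin.last n) ≠ 0 := by
  intro hlast
  refine hv.not_ge ?_
  rw [lorQ, hlast, mul_zero, zero_add]
  exact Finset.sum_nonneg fun i _ => by positivity

theorem IsCartan.exists_mul_eq_maximalCompact_mul_horospherical [NeZero n] (hA : IsCartan A)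
    (g : LorentzGrp n) :
    ∃ k ∈ maximalCompact n, ∃ x s, g * A s = k * horospherical n (.ofAdd x) := by
  have hv : lorQ n (lorRep n g⁻¹ (basePt n)) = -2 := by
    rw [lorQ_lorRep, lorQ_basePt]
  have hlast : lorRep n g⁻¹ (basePt n) (Fin.last n) ≠ 0 := last_ne_zero_of_lorQ_neg (by linarith)
  obtain ⟨ε, hε, hneg⟩ : ∃ ε : ℝ, ε * ε = 1 ∧
      (ε • lorRep n g⁻¹ (basePt n)) (Fin.last n) < 0 := by
    rcases hlast.lt_or_gt with h | h
    · exact ⟨1, by simpa using h⟩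
    · exact ⟨-1, by simpa using h⟩
  have hεv : lorQ n (ε • lorRep n g⁻¹ (basePt n)) = -2 := by
    rw [lorQ_smul, hε, hv, one_mul]
  obtain ⟨s, x, hsx⟩ := hA.exists_lorRep_horospherical_basePt_eq hεv hneg
  refine ⟨g * A s * horospherical n (.ofAdd x), mem_maximalCompact (ε := ε) ?_, -x, s, ?_⟩
  · rw [map_mul, map_mul, Module.End.mul_apply, Module.End.mul_apply, hsx, map_smul,
      Representation.self_inv_apply]
  · rw [ofAdd_neg, map_inv, mul_inv_cancel_right]

end Iwasawa

/-- Let `n ≥ 2` and let `ρ` be a continuous representation of `O(1,n)` on a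
finite-dimensional real normed vector space `V`. If `w ∈ V` is fixed by the Cartan subgroup
`A = {a^s}` (where `a^s e₁ = e^s e₁`, `a^s e_{n+1} = e^{-s} e_{n+1}`, `a^s eᵢ = eᵢ` otherwise),
then the orbit `{ρ(g) w : g ∈ O(1,n)}` is closed in `V`. -/
theorem orbit_closed_of_cartan_fixed
    (n : ℕ) (hn : 2 ≤ n)
    (V : Type*) [NormedAddCommGroup V] [NormedSpace ℝ V] [FiniteDimensional ℝ V]
    (ρ : LorentzGrp n →* (V →L[ℝ] V)) (hρ : Continuous fun g => ρ g)
    (A : ℝ → LorentzGrp n)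
    (hA : ∀ (s : ℝ) (x : Fin (n + 1) → ℝ), lorAct (A s) x = fun i =>
      if i = 0 then Real.exp s * x 0
      else if i = Fin.last n then Real.exp (-s) * x (Fin.last n)
      else x i)
    (w : V) (hw : ∀ s : ℝ, ρ (A s) w = w) :
    IsClosed {v : V | ∃ g : LorentzGrp n, v = ρ g w} := by
  have : NeZero n := ⟨by lia⟩
  have hCartan : IsCartan A := hA
  have hrange : {v : V | ∃ g : LorentzGrp n, v = ρ g w} = Set.range fun g => ρ g w :=
    Set.ext fun v => exists_congr fun g => eq_comm
  rw [hrange]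
  exact isClosed_orbit_of_isCompact_of_dilation hρ isCompact_maximalCompact
    continuous_horospherical hCartan.mul_horospherical
    hCartan.exists_mul_eq_maximalCompact_mul_horospherical hw
end
end

section
/- Let n ≥ 2 and let q be the Lorentzian quadratic form q(x) = 2x₁x_{n+1} + x₂² + ⋯ + xₙ² on ℝ^{n+1}. Let u₁, …, u_m be nonzero vectors of ℝ^{n+1} with q(uᵢ) = 0 for every i, and assume that the linear span of {u₁, …, u_m} has dimension at least 3. Then the subgroup of O(1,n) leaving each of the lines ℝu₁, …, ℝu_m invariant, namely {g ∈ O(1,n) : for every i there exists λ ∈ ℝ with g(uᵢ) = λ·uᵢ}, is a compact subset of the space of linear automorphisms of ℝ^{n+1}. -/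
open Matrix Filter Topology Bornology

noncomputable section

/-!
Call a form Lorentzian here if it has at most one non-positive direction, expressed as
`finrank K V ≤ sigPos Q + 1`; orthogonal vectors `x`, `y` with `Q x ≤ 0` and `Q y ≤ 0` are then
linearly dependent. If an isometry `f` scales three independent lightlike vectors by `c₀`, `c₁`,
`c₂`, their pairings are nonzero, so `cᵢ cⱼ = 1` for `i ≠ j`, and the three scalars are equal to
the same sign. Hence `f` fixes, up to sign, a timelike vector `w` in the span of two of them, and so
preserves the positive definite form obtained from `Q` by reversing its sign along `w`. The
stabilizer is thus a closed subset of a compact orthogonal group.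
-/

open Module QuadraticMap

section CommRing

variable {R V : Type*} [CommRing R] [AddCommGroup V] [Module R V] {Q : QuadraticForm R V}

theorem quadraticForm_smul_add_smul (Q : QuadraticForm R V) (a b : R) (x y : V) :
    Q (a • x + b • y) = a ^ 2 * Q x + b ^ 2 * Q y + a * b * polar Q x y := by
  rw [QuadraticMap.map_add Q, polar_smul_left, polar_smul_right]
  simp only [QuadraticMap.map_smul, smul_eq_mul]
  ring

theorem polar_map_map {f : V →ₗ[R] V} (hf : ∀ x, Q (f x) = Q x) (x y : V) :
    polar Q (f x) (f y) = polar Q x y := by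
  simp only [polar, ← map_add, hf]

theorem mul_eq_one_of_polar_ne_zero [IsDomain R] {f : V →ₗ[R] V} (hf : ∀ x, Q (f x) = Q x)
    {x y : V} {a b : R} (hx : f x = a • x) (hy : f y = b • y) (hxy : polar Q x y ≠ 0) :
    a * b = 1 := by
  have h := polar_map_map hf x y
  rw [hx, hy, polar_smul_left, polar_smul_right, smul_eq_mul, smul_eq_mul, ← mul_assoc] at h
  exact (mul_eq_right₀ hxy).1 h

/-- The form obtained from `Q` by reversing its sign along `w` and keeping it on the orthogonal
complement of `w`, scaled by `-2 * Q w` so that no division is needed. For a Lorentzian `Q` and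
a timelike `w` it is a Euclidean structure. -/
def flipAlong (Q : QuadraticForm R V) (w : V) : QuadraticForm R V :=
  QuadraticMap.sq.comp (Q.polarBilin w) - (2 * Q w) • Q

theorem flipAlong_apply (Q : QuadraticForm R V) (w x : V) :
    flipAlong Q w x = polar Q w x ^ 2 - 2 * Q w * Q x := by
  simp [flipAlong, pow_two]

theorem flipAlong_map {f : V →ₗ[R] V} (hf : ∀ x, Q (f x) = Q x) {w : V} {c : R} (hc : c ^ 2 = 1)
    (hw : f w = c • w) (x : V) : flipAlong Q w (f x) = flipAlong Q w x := by
  have hpolar : c * polar Q w (f x) = polar Q w x := by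
    rw [← polar_map_map hf w x, hw, polar_smul_left, smul_eq_mul]
  rw [flipAlong_apply, flipAlong_apply, hf, ← hpolar, mul_pow, hc, one_mul]

end CommRing

section Field

variable {K V : Type*} [Field K] [AddCommGroup V] [Module K V] [FiniteDimensional K V]

theorem exists_linearIndependent_comp_of_le_finrank_span {ι : Type*} {u : ι → V} {d : ℕ}
    (h : d ≤ finrank K (Submodule.span K (Set.range u))) :
    ∃ k : Fin d → ι, LinearIndependent K (u ∘ k) := by
  obtain ⟨f, hf, -, hli⟩ := Submodule.exists_fun_fin_finrank_span_eq K (Set.range u)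
  choose k hk using hf
  refine ⟨k ∘ Fin.castLE h, ?_⟩
  rw [← Function.comp_assoc, show u ∘ k = f from funext hk]
  exact hli.comp _ (Fin.castLE_injective h)

theorem isUnit_of_anisotropic {P : QuadraticForm K V} (hP : P.Anisotropic) {f : V →ₗ[K] V}
    (hf : ∀ x, P (f x) = P x) : IsUnit f := by
  rw [LinearMap.isUnit_iff_ker_eq_bot, LinearMap.ker_eq_bot']
  intro x hx
  exact hP x (by rw [← hf, hx, QuadraticMap.map_zero])

end Field

section OrderedField

variable {K V : Type*} [Field K] [LinearOrder K] [AddCommGroup V] [Module K V]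
  [FiniteDimensional K V] {Q : QuadraticForm K V}

theorem finrank_le_one_of_nonpos (hQ : finrank K V ≤ sigPos Q + 1) {N : Submodule K V}
    (hN : ∀ x ∈ N, Q x ≤ 0) : finrank K N ≤ 1 := by
  obtain ⟨W, hW, hWpos⟩ := exists_finrank_eq_sigPos_and_posDef Q
  have hdisj : Disjoint W N := Submodule.disjoint_def.2 fun x hxW hxN =>
    congrArg Subtype.val ((hWpos.le_zero_iff (x := ⟨x, hxW⟩)).1 (hN x hxN))
  have := Submodule.finrank_add_finrank_le_of_disjoint hdisj
  omega

variable [IsStrictOrderedRing K]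

theorem not_linearIndependent_of_polar_eq_zero (hQ : finrank K V ≤ sigPos Q + 1) {x y : V}
    (hx : Q x ≤ 0) (hy : Q y ≤ 0) (hxy : polar Q x y = 0) : ¬ LinearIndependent K ![x, y] := by
  intro hli
  have hdim : finrank K (Submodule.span K {x, y}) = 2 := by
    rw [← Matrix.range_cons_cons_empty x y ![], finrank_span_eq_card hli, Fintype.card_fin]
  have hnonpos : ∀ z ∈ Submodule.span K {x, y}, Q z ≤ 0 := by
    intro z hz
    obtain ⟨a, b, rfl⟩ := Submodule.mem_span_pair.1 hz
    rw [quadraticForm_smul_add_smul, hxy]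
    nlinarith [sq_nonneg a, sq_nonneg b]
  have := finrank_le_one_of_nonpos hQ hnonpos
  omega

theorem pos_of_neg_of_polar_eq_zero (hQ : finrank K V ≤ sigPos Q + 1) {w y : V} (hw : Q w < 0)
    (hwy : polar Q w y = 0) (hy : y ≠ 0) : 0 < Q y := by
  by_contra! hQy
  refine not_linearIndependent_of_polar_eq_zero hQ hw.le hQy hwy
    (LinearIndependent.pair_iff.2 fun a b hab => ?_)
  have ha : a = 0 := by
    have : polar Q w (a • w + b • y) = 0 := by rw [hab, polar_zero_right]
    simpa [polar_add_right, polar_smul_right, polar_self, hwy, hw.ne] using this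
  exact ⟨ha, by simpa [ha, hy] using hab⟩

theorem flipAlong_posDef (hQ : finrank K V ≤ sigPos Q + 1) {w : V} (hw : Q w < 0) :
    (flipAlong Q w).PosDef := by
  intro x hx
  set p := polar Q w x with hp
  -- `2 * Q w` times the component of `x` orthogonal to `w`
  set y := (2 * Q w) • x + (-p) • w with hy
  have hwy : polar Q w y = 0 := by
    simp only [hy, polar_add_right, polar_smul_right, polar_self, smul_eq_mul, nsmul_eq_mul, ← hp]
    push_cast
    ring
  have hsplit : (-2 * Q w) * flipAlong Q w x = -Q w * p ^ 2 + Q y := by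
    rw [flipAlong_apply, hy, quadraticForm_smul_add_smul, polar_comm Q x w, ← hp]
    ring
  suffices 0 < -Q w * p ^ 2 + Q y from
    pos_of_mul_pos_right (hsplit ▸ this) (by linarith)
  by_cases hp0 : p = 0
  · have hy0 : y ≠ 0 := by simp [hy, hp0, hw.ne, hx]
    simpa [hp0] using pos_of_neg_of_polar_eq_zero hQ hw hwy hy0
  · have hQy : 0 ≤ Q y := by
      rcases eq_or_ne y 0 with h | h
      · rw [h, QuadraticMap.map_zero]
      · exact (pos_of_neg_of_polar_eq_zero hQ hw hwy h).le
    have : 0 < -Q w * p ^ 2 := mul_pos (neg_pos.2 hw) (by positivity)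
    linarith

theorem exists_timelike_apply_eq_smul (hQ : finrank K V ≤ sigPos Q + 1) {v : Fin 3 → V}
    (hv : LinearIndependent K v) (hlight : ∀ i, Q (v i) = 0) :
    ∃ w, Q w < 0 ∧ ∀ f : V →ₗ[K] V, (∀ x, Q (f x) = Q x) → (∀ i, ∃ c : K, f (v i) = c • v i) →
      ∃ c : K, c ^ 2 = 1 ∧ f w = c • w := by
  have hpolar : ∀ i j, i ≠ j → polar Q (v i) (v j) ≠ 0 := fun i j hij hzero =>
    not_linearIndependent_of_polar_eq_zero hQ (hlight i).le (hlight j).le hzero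
      (LinearIndependent.pair_iff.2
        ((LinearIndepOn.pair_iff v hij).1 (hv.linearIndepOn _)))
  refine ⟨(1 : K) • v 0 + (-polar Q (v 0) (v 1)) • v 1, ?_, fun f hf hfv => ?_⟩
  · have := sq_pos_of_ne_zero (hpolar 0 1 (by decide))
    rw [quadraticForm_smul_add_smul, hlight, hlight]
    linarith
  · choose c hc using hfv
    have hmul : ∀ i j, i ≠ j → c i * c j = 1 := fun i j hij =>
      mul_eq_one_of_polar_ne_zero hf (hc i) (hc j) (hpolar i j hij)
    have h02 := hmul 0 2 (by decide)
    have heq : c 1 = c 0 := mul_right_cancel₀ (right_ne_zero_of_mul_eq_one h02)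
      ((hmul 1 2 (by decide)).trans h02.symm)
    refine ⟨c 0, ?_, ?_⟩
    · rw [pow_two, ← hmul 0 1 (by decide), heq]
    · rw [map_add, map_smul, map_smul, hc, hc, heq, smul_add, smul_comm (c 0), smul_comm (c 0)]

end OrderedField

section Real

variable {V : Type*} [NormedAddCommGroup V] [NormedSpace ℝ V] [FiniteDimensional ℝ V]

theorem continuous_quadraticForm (Q : QuadraticForm ℝ V) : Continuous Q := by
  have hB : Continuous fun x => (associated Q).toContinuousBilinearMap x x := by fun_prop
  simpa only [LinearMap.toContinuousBilinearMap_apply, associated_eq_self_apply] using hB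

theorem exists_pos_mul_sq_norm_le {P : QuadraticForm ℝ V} (hP : P.PosDef) :
    ∃ δ > 0, ∀ x, δ * ‖x‖ ^ 2 ≤ P x := by
  cases subsingleton_or_nontrivial V
  · exact ⟨1, one_pos, fun x => by simp [Subsingleton.elim x 0]⟩
  obtain ⟨z, hz, hmin⟩ := (isCompact_sphere (0 : V) 1).exists_isMinOn
    (NormedSpace.sphere_nonempty.2 zero_le_one) (continuous_quadraticForm P).continuousOn
  refine ⟨P z, hP z (ne_zero_of_mem_unit_sphere ⟨z, hz⟩), fun x => ?_⟩
  rcases eq_or_ne x 0 with rfl | hx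
  · simp
  have hx' : ‖x‖ ≠ 0 := norm_ne_zero_iff.2 hx
  have hmem : ‖x‖⁻¹ • x ∈ Metric.sphere (0 : V) 1 := by simp [norm_smul, hx']
  calc P z * ‖x‖ ^ 2 ≤ P (‖x‖⁻¹ • x) * ‖x‖ ^ 2 := by gcongr; exact hmin hmem
    _ = P x := by rw [QuadraticMap.map_smul, smul_eq_mul]; field_simp

theorem isBounded_isometries_of_posDef {P : QuadraticForm ℝ V} (hP : P.PosDef) :
    IsBounded {f : V →L[ℝ] V | ∀ x, P (f x) = P x} := by
  obtain ⟨δ, hδ, hle⟩ := exists_pos_mul_sq_norm_le hP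
  have := FiniteDimensional.complete ℝ V
  obtain ⟨C, hC⟩ := banach_steinhaus
    (g := fun f : {f : V →L[ℝ] V | ∀ x, P (f x) = P x} => (f : V →L[ℝ] V)) fun x =>
      ⟨√(P x / δ), fun f => Real.le_sqrt_of_sq_le <| by
        rw [le_div_iff₀' hδ, ← f.2 x]
        exact hle _⟩
  exact isBounded_iff_forall_norm_le.2 ⟨C, fun f hf => hC ⟨f, hf⟩⟩

theorem isClosed_isometries_stabilizing_lines {ι : Type*} (Q : QuadraticForm ℝ V) (u : ι → V) :
    IsClosed {f : V →L[ℝ] V | (∀ x, Q (f x) = Q x) ∧ ∀ i, ∃ c : ℝ, f (u i) = c • u i} := by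
  have heval : ∀ x : V, Continuous fun f : V →L[ℝ] V => f x := fun x => by fun_prop
  simp only [Set.ofPred_and, Set.ofPred_forall]
  refine (isClosed_iInter fun x => ?_).inter (isClosed_iInter fun i => ?_)
  · exact isClosed_eq ((continuous_quadraticForm Q).comp (heval x)) continuous_const
  · simp only [eq_comm (b := _ • u i), ← Submodule.mem_span_singleton]
    exact (Submodule.closed_of_finiteDimensional (ℝ ∙ u i)).preimage (heval (u i))

theorem isCompact_stabilizer_of_lightlike_lines_general {ι : Type*} {Q : QuadraticForm ℝ V}
    (hQ : finrank ℝ V ≤ sigPos Q + 1) {u : ι → V} (hu : ∀ i, Q (u i) = 0)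
    (hspan : 3 ≤ finrank ℝ (Submodule.span ℝ (Set.range u))) :
    IsCompact {f : V →L[ℝ] V |
      IsUnit f ∧ (∀ x, Q (f x) = Q x) ∧ ∀ i, ∃ c : ℝ, f (u i) = c • u i} := by
  obtain ⟨k, hk⟩ := exists_linearIndependent_comp_of_le_finrank_span hspan
  obtain ⟨w, hw, hstab⟩ := exists_timelike_apply_eq_smul hQ hk fun i => hu (k i)
  have hpos := flipAlong_posDef hQ hw
  let S : Set (V →L[ℝ] V) := {f | (∀ x, Q (f x) = Q x) ∧ ∀ i, ∃ c : ℝ, f (u i) = c • u i}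
  have hflip : ∀ f ∈ S, ∀ x, flipAlong Q w (f x) = flipAlong Q w x := by
    rintro f ⟨hf, hfu⟩
    obtain ⟨c, hc, hfw⟩ := hstab f hf fun i => hfu (k i)
    exact flipAlong_map (f := (f : V →ₗ[ℝ] V)) hf hc hfw
  have hunit : S ⊆ {f | IsUnit f} := fun f hf =>
    ContinuousLinearMap.isUnit_iff_isUnit_toLinearMap.2
      (isUnit_of_anisotropic hpos.anisotropic (hflip f hf))
  have hS : IsCompact S :=
    Metric.isCompact_of_isClosed_isBounded (isClosed_isometries_stabilizing_lines Q u)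
      ((isBounded_isometries_of_posDef hpos).subset hflip)
  rwa [Set.ofPred_and, Set.inter_eq_right.2 hunit]

end Real

/-- `lorQ n` as a quadratic form. -/
def lorentzForm (n : ℕ) : QuadraticForm ℝ (Fin (n + 1) → ℝ) :=
  2 • proj 0 (Fin.last n) + ∑ i with i ≠ 0 ∧ i ≠ Fin.last n, proj i i

theorem lorentzForm_apply (n : ℕ) (x : Fin (n + 1) → ℝ) : lorentzForm n x = lorQ n x := by
  simp [lorentzForm, lorQ, ← Finset.sum_filter, pow_two, mul_assoc]

theorem lorQ_pos_of_apply_zero_eq_apply_last {n : ℕ} {x : Fin (n + 1) → ℝ} (hx : x ≠ 0)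
    (h : x 0 = x (Fin.last n)) : 0 < lorQ n x := by
  obtain ⟨j, hj⟩ := Function.ne_iff.1 hx
  have hj2 : 0 < x j ^ 2 := sq_pos_of_ne_zero hj
  have hnonneg : ∀ i ∈ Finset.univ, 0 ≤ if i ≠ 0 ∧ i ≠ Fin.last n then x i ^ 2 else 0 :=
    fun i _ => by split_ifs <;> positivity
  have hsum := Finset.single_le_sum hnonneg (Finset.mem_univ j)
  rw [lorQ, ← h]
  split_ifs at hsum with hmid
  · nlinarith [sq_nonneg (x 0)]
  · have hj0 : x j = x 0 := by
      by_cases hj' : j = 0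
      · rw [hj']
      · rw [h, not_not.1 fun hlast => hmid ⟨hj', hlast⟩]
    rw [hj0] at hj2
    linarith

theorem finrank_le_sigPos_lorentzForm_add_one (n : ℕ) :
    finrank ℝ (Fin (n + 1) → ℝ) ≤ sigPos (lorentzForm n) + 1 := by
  let coord (i : Fin (n + 1)) : Dual ℝ (Fin (n + 1) → ℝ) := LinearMap.proj i
  let φ := coord 0 - coord (Fin.last n)
  have hpos : ((lorentzForm n).restrict φ.ker).PosDef := fun x hx => by
    rw [restrict_apply, lorentzForm_apply]
    exact lorQ_pos_of_apply_zero_eq_apply_last (fun h => hx (Subtype.ext h)) (sub_eq_zero.1 x.2)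
  calc finrank ℝ (Fin (n + 1) → ℝ) = finrank ℝ φ.range + finrank ℝ φ.ker :=
        φ.finrank_range_add_finrank_ker.symm
    _ ≤ 1 + sigPos (lorentzForm n) :=
        add_le_add (φ.range.finrank_le.trans_eq (finrank_self ℝ)) (le_sigPos_of_posDef _ hpos)
    _ = sigPos (lorentzForm n) + 1 := add_comm _ _

section MatrixEquiv

variable {𝕜 n : Type*} [NontriviallyNormedField 𝕜] [CompleteSpace 𝕜] [Fintype n] [DecidableEq n]

variable (𝕜 n) in
/-- The identification of matrices with continuous linear maps as topological vector spaces. -/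
def matrixEquivCLM : Matrix n n 𝕜 ≃L[𝕜] ((n → 𝕜) →L[𝕜] (n → 𝕜)) :=
  (Matrix.toLin'.trans LinearMap.toContinuousLinearMap).toContinuousLinearEquiv

theorem matrixEquivCLM_apply (M : Matrix n n 𝕜) (x : n → 𝕜) :
    matrixEquivCLM 𝕜 n M x = M.mulVec x := rfl

theorem isUnit_matrixEquivCLM_iff {M : Matrix n n 𝕜} : IsUnit (matrixEquivCLM 𝕜 n M) ↔ IsUnit M :=
  ContinuousLinearMap.isUnit_iff_isUnit_toLinearMap.trans Matrix.isUnit_toLin'_iff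

end MatrixEquiv

/-- Let `n ≥ 2` and let `u₁, …, u_m` be nonzero lightlike vectors of `ℝ^{n+1}`
whose linear span has dimension at least `3`. Then the subgroup of `O(1,n)` leaving each of the
lines `ℝuᵢ` invariant is a compact subset of the space of linear automorphisms of `ℝ^{n+1}`
(viewed inside the space of matrices). -/
theorem isCompact_stabilizer_of_lightlike_lines
    (n : ℕ) (hn : 2 ≤ n) (m : ℕ) (u : Fin m → Fin (n + 1) → ℝ)
    (hu0 : ∀ i, u i ≠ 0) (huq : ∀ i, lorQ n (u i) = 0)
    (hspan : 3 ≤ Module.finrank ℝ (Submodule.span ℝ (Set.range u))) :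
    IsCompact {M : Matrix (Fin (n + 1)) (Fin (n + 1)) ℝ |
      IsUnit M ∧ (∀ x, lorQ n (M.mulVec x) = lorQ n x) ∧
      ∀ i, ∃ c : ℝ, M.mulVec (u i) = c • u i} := by
  simpa only [Set.preimage_ofPred_eq, ContinuousLinearEquiv.coe_toHomeomorph,
    isUnit_matrixEquivCLM_iff, matrixEquivCLM_apply, lorentzForm_apply] using
    (matrixEquivCLM ℝ (Fin (n + 1))).toHomeomorph.isCompact_preimage.2
      (isCompact_stabilizer_of_lightlike_lines_general (finrank_le_sigPos_lorentzForm_add_one n)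
        (fun i => (lorentzForm_apply n (u i)).trans (huq i)) hspan)
end
end
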